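/- Radial symmetry for the fractional Hénon system: Let α ∈ (0,2), n > α, q, r > (n+α)/(n−α), σ₁ = (n−α)q − (n+α), σ₂ = (n−α)r − (n+α), and let (u,v) ∈ (L_α ∩ C^{1,1}_{loc}(ℝ^n))² be a positive solution of (−Δ)^{α/2}u = |x|^{σ₁}v^q, (−Δ)^{α/2}v = |x|^{σ₂}u^r on ℝ^n. If |x|^{n−α}u(x) → +∞ and |x|^{n−α}v(x) → +∞ as |x| → ∞, then u and v are radially symmetric about the origin. -/

import Mathlib

open Set MeasureTheory Filter

/-- `F x` is the value of the principal-value fractional Laplacian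
`(−Δ)^{α/2} u` (with normalizing constant `C`) at every point `x`. -/
def IsFracLap (n : ℕ) (α C : ℝ) (u F : EuclideanSpace ℝ (Fin n) → ℝ) : Prop :=
  ∀ x, Tendsto
    (fun ε : ℝ => C * ∫ y in {y : EuclideanSpace ℝ (Fin n) | ε ≤ dist x y},
      (u x - u y) / dist x y ^ ((n : ℝ) + α))
    (nhdsWithin 0 (Ioi 0)) (nhds (F x))

/-- Membership in the space `L_α`. -/
def MemLalpha (n : ℕ) (α : ℝ) (u : EuclideanSpace ℝ (Fin n) → ℝ) : Prop :=
  Integrable (fun x : EuclideanSpace ℝ (Fin n) => |u x| / (1 + ‖x‖ ^ ((n : ℝ) + α)))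

/-- `C^{1,1}_{loc}` regularity: `C¹` with locally Lipschitz derivative. -/
def C11loc {n : ℕ} (u : EuclideanSpace ℝ (Fin n) → ℝ) : Prop :=
  ContDiff ℝ 1 u ∧ LocallyLipschitz (fderiv ℝ u)

section Helpers
open EuclideanGeometry Topology

abbrev EE (n : ℕ) := EuclideanSpace ℝ (Fin n)

lemma inv_det {n : ℕ} (c y : EE n) (ρ : ℝ) :
    |((ρ / dist y c) ^ 2 • ((ℝ ∙ (y - c))ᗮ.reflection : EE n →L[ℝ] EE n)).det|
      = (ρ / dist y c) ^ (2 * n) := by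
  have h1 : ((ρ / dist y c) ^ 2 • ((ℝ ∙ (y - c))ᗮ.reflection : EE n →L[ℝ] EE n)).det
      = ((ρ / dist y c) ^ 2) ^ n * LinearMap.det ((ℝ ∙ (y - c))ᗮ.reflection).toLinearMap := by
    rw [ContinuousLinearMap.det, ContinuousLinearMap.toLinearMap_smul, LinearMap.det_smul]
    rw [finrank_euclideanSpace_fin]
    rfl
  rw [h1, Submodule.det_reflection, abs_mul, abs_pow, abs_pow, abs_pow]
  simp [pow_mul]

lemma meas_inv {n : ℕ} (c : EE n) (ρ : ℝ) : Measurable (inversion c ρ) := by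
  unfold inversion
  fun_prop

lemma image_inv {n : ℕ} (c : EE n) {ρ : ℝ} (hρ : ρ ≠ 0) (A : Set (EE n)) :
    inversion c ρ '' ((inversion c ρ ⁻¹' A) \ {c}) = A \ {c} := by
  ext z
  constructor
  · rintro ⟨y, ⟨hy, hyc⟩, rfl⟩
    refine ⟨hy, ?_⟩
    simpa [inversion_eq_center hρ] using hyc
  · rintro ⟨hz, hzc⟩
    refine ⟨inversion c ρ z, ⟨?_, ?_⟩, inversion_inversion c hρ z⟩
    · simpa [inversion_inversion c hρ z] using hz
    · simpa [inversion_eq_center hρ] using hzc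

lemma ae_diff_c {n : ℕ} [NeZero n] (c : EE n) (A : Set (EE n)) :
    (A \ {c} : Set (EE n)) =ᵐ[volume] A :=
  sdiff_null_ae_eq_self (measure_singleton c)

lemma cv_integral {n : ℕ} [NeZero n] (c : EE n) {ρ : ℝ} (hρ : ρ ≠ 0) {A : Set (EE n)}
    (hA : MeasurableSet A) (f : EE n → ℝ) :
    ∫ z in A, f z = ∫ y in inversion c ρ ⁻¹' A, (ρ / dist y c) ^ (2 * n) * f (inversion c ρ y) := by
  rw [← setIntegral_congr_set (ae_diff_c c A), ← image_inv c hρ A,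
    integral_image_eq_integral_abs_det_fderiv_smul volume
      (((meas_inv c ρ) hA).diff (measurableSet_singleton c))
      (fun y hy => (hasFDerivAt_inversion (R := ρ) hy.2).hasFDerivWithinAt)
      ((inversion_injective c hρ).injOn), setIntegral_congr_set (ae_diff_c c _)]
  simp only [inv_det, smul_eq_mul]

lemma cv_integrable {n : ℕ} [NeZero n] (c : EE n) {ρ : ℝ} (hρ : ρ ≠ 0) {A : Set (EE n)}
    (hA : MeasurableSet A) (f : EE n → ℝ) :
    IntegrableOn f A ↔
      IntegrableOn (fun y => (ρ / dist y c) ^ (2 * n) * f (inversion c ρ y)) (inversion c ρ ⁻¹' A) := by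
  rw [← integrableOn_congr_set_ae (ae_diff_c c A), ← image_inv c hρ A,
    integrableOn_image_iff_integrableOn_abs_det_fderiv_smul volume
      (((meas_inv c ρ) hA).diff (measurableSet_singleton c))
      (fun y hy => (hasFDerivAt_inversion (R := ρ) hy.2).hasFDerivWithinAt)
      ((inversion_injective c hρ).injOn), integrableOn_congr_set_ae (ae_diff_c c _)]
  simp only [inv_det, smul_eq_mul]

/-- Exterior of a ball. -/
def extb {n : ℕ} (x : EE n) (ε : ℝ) : Set (EE n) := {y | ε ≤ dist x y}

lemma extb_meas {n : ℕ} (x : EE n) (ε : ℝ) : MeasurableSet (extb x ε) :=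
  (isClosed_le continuous_const (by fun_prop)).measurableSet

/-- Kelvin transform. -/
noncomputable def kel (n : ℕ) (α : ℝ) (c : EE n) (ρ : ℝ) (g : EE n → ℝ) (y : EE n) : ℝ :=
  (ρ / dist y c) ^ ((n : ℝ) - α) * g (inversion c ρ y)

/-- pointwise kernel identity -/
lemma kernel_id {n : ℕ} {α : ℝ} (hk : 0 < (n : ℝ) + α) {c x y : EE n} {ρ : ℝ} (hρ : 0 < ρ) (hx : x ≠ c) (hy : y ≠ c)
    (t : ℝ) :
    (ρ / dist y c) ^ (2 * n) * (t / dist (inversion c ρ x) (inversion c ρ y) ^ ((n : ℝ) + α))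
     = (dist x c / ρ) ^ ((n : ℝ) + α) *
        ((ρ / dist y c) ^ ((n : ℝ) - α) * t / dist x y ^ ((n : ℝ) + α)) := by
  rcases eq_or_ne x y with rfl | hxy
  · simp [Real.zero_rpow hk.ne']
  have h1 := dist_pos.2 hx
  have h2 := dist_pos.2 hy
  have h3 := dist_pos.2 hxy
  rw [dist_inversion_inversion hx hy, ← Real.rpow_natCast, Real.mul_rpow (by positivity) h3.le,
    Real.div_rpow (by positivity) (mul_nonneg h1.le h2.le) ((n : ℝ) + α), Real.mul_rpow h1.le h2.le,
    Real.div_rpow hρ.le h2.le, Real.div_rpow hρ.le h2.le, Real.div_rpow h1.le hρ.le]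
  have e1 : (ρ : ℝ) ^ ((2 * n : ℕ) : ℝ) = ρ ^ ((n : ℝ) + α) * ρ ^ ((n : ℝ) - α) := by
    rw [← Real.rpow_add hρ]; push_cast; ring_nf
  have e2 : (dist y c : ℝ) ^ ((2 * n : ℕ) : ℝ) = dist y c ^ ((n : ℝ) + α) * dist y c ^ ((n : ℝ) - α) := by
    rw [← Real.rpow_add h2]; push_cast; ring_nf
  have e3 : (ρ ^ 2 : ℝ) ^ ((n : ℝ) + α) = ρ ^ ((n : ℝ) + α) * ρ ^ ((n : ℝ) + α) := by
    rw [sq, Real.mul_rpow hρ.le hρ.le]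
  rw [e1, e2, e3]
  have p1 := Real.rpow_pos_of_pos hρ ((n : ℝ) + α)
  have p2 := Real.rpow_pos_of_pos hρ ((n : ℝ) - α)
  have p3 := Real.rpow_pos_of_pos h2 ((n : ℝ) + α)
  have p4 := Real.rpow_pos_of_pos h2 ((n : ℝ) - α)
  have p5 := Real.rpow_pos_of_pos h1 ((n : ℝ) + α)
  have p6 := Real.rpow_pos_of_pos h3 ((n : ℝ) + α)
  field_simp

lemma ae_ne {n : ℕ} [NeZero n] (c : EE n) (μ : Measure (EE n)) (hμ : μ ≪ volume): ∀ᵐ y ∂μ, y ≠ c := by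
  apply hμ
  simp

/-- Integrability off the pole -/
lemma int_off {n : ℕ} {α : ℝ} (hα : 0 < α) {g : EE n → ℝ} (hg : Continuous g)
    (hL : MemLalpha n α g) (x : EE n) {ε : ℝ} (hε : 0 < ε) :
    IntegrableOn (fun y => g y / dist x y ^ ((n : ℝ) + α)) (extb x ε) := by
  have hk : 0 < (n : ℝ) + α := by positivity
  set k := (n : ℝ) + α with hkdef
  set M : ℝ := ε⁻¹ ^ k + (‖x‖ / ε + 1) ^ k with hM
  refine Integrable.mono' ((hL.const_mul M).integrableOn) ?_ ?_
  · apply AEStronglyMeasurable.div₀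
    · exact hg.aestronglyMeasurable
    · apply Continuous.aestronglyMeasurable
      exact (continuous_const.dist continuous_id).rpow_const (fun _ => Or.inr hk.le)
  · filter_upwards [ae_restrict_mem (extb_meas x ε)] with y hy
    have hy : ε ≤ dist x y := hy
    have hd : 0 < dist x y := hε.trans_le hy
    rw [norm_div, Real.norm_eq_abs, Real.norm_eq_abs, abs_of_pos (Real.rpow_pos_of_pos hd k),
      ← mul_div_assoc, div_le_div_iff₀ (Real.rpow_pos_of_pos hd k) (by positivity)]
    have key : 1 + ‖y‖ ^ k ≤ M * dist x y ^ k := by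
      have a1 : (1 : ℝ) ≤ ε⁻¹ ^ k * dist x y ^ k := by
        rw [← Real.mul_rpow (by positivity) hd.le]
        apply Real.one_le_rpow _ hk.le
        rw [inv_mul_eq_div, one_le_div hε]; exact hy
      have a2 : ‖y‖ ^ k ≤ (‖x‖ / ε + 1) ^ k * dist x y ^ k := by
        rw [← Real.mul_rpow (by positivity) hd.le]
        apply Real.rpow_le_rpow (norm_nonneg _) _ hk.le
        have : ‖y‖ ≤ ‖x‖ + dist x y := by
          rw [dist_eq_norm]
          calc ‖y‖ = ‖x - (x - y)‖ := by congr 1; abel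
            _ ≤ _ := norm_sub_le _ _
        have h3 : ‖x‖ ≤ ‖x‖ / ε * dist x y := by
          rw [div_mul_eq_mul_div, le_div_iff₀ hε]
          exact mul_le_mul_of_nonneg_left hy (norm_nonneg _)
        linarith
      rw [hM, add_mul]; linarith
    calc |g y| * (1 + ‖y‖ ^ k) ≤ |g y| * (M * dist x y ^ k) :=
          mul_le_mul_of_nonneg_left key (abs_nonneg _)
      _ = _ := by ring

lemma memL_one {n : ℕ} {α : ℝ} (hα : 0 < α) : MemLalpha n α (fun _ => 1) := by
  have hk : 0 < (n : ℝ) + α := by positivity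
  have h0 : Integrable (fun x : EE n => (1 + ‖x‖) ^ (-((n : ℝ) + α))) :=
    integrable_one_add_norm (by simp [hα])
  refine Integrable.mono' (h0.const_mul (2 ^ ((n : ℝ) + α))) ?_ ?_
  · apply Measurable.aestronglyMeasurable
    fun_prop
  · filter_upwards with x
    have hx := norm_nonneg x
    have hp : 0 ≤ ‖x‖ ^ ((n : ℝ) + α) := by positivity
    rw [Real.norm_of_nonneg (by positivity), Real.rpow_neg (by positivity), abs_one, ← div_eq_mul_inv,
      div_le_div_iff₀ (by positivity) (by positivity), one_mul]
    rcases le_total ‖x‖ 1 with h | h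
    · calc (1 + ‖x‖) ^ ((n : ℝ) + α) ≤ 2 ^ ((n : ℝ) + α) :=
          Real.rpow_le_rpow (by positivity) (by linarith) hk.le
        _ ≤ _ := le_mul_of_one_le_right (by positivity) (by linarith)
    · calc (1 + ‖x‖) ^ ((n : ℝ) + α) ≤ (2 * ‖x‖) ^ ((n : ℝ) + α) :=
          Real.rpow_le_rpow (by positivity) (by linarith) hk.le
        _ = 2 ^ ((n : ℝ) + α) * ‖x‖ ^ ((n : ℝ) + α) := Real.mul_rpow (by positivity) hx
        _ ≤ _ := mul_le_mul_of_nonneg_left (by linarith) (by positivity)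

lemma kel_int {n : ℕ} [NeZero n] {α : ℝ} (hα : 0 < α) {g : EE n → ℝ} (hg : Continuous g)
    (hL : MemLalpha n α g) {c x : EE n} {ρ : ℝ} (hρ : 0 < ρ) (hx : x ≠ c) {τ : ℝ} (hτ : 0 < τ) :
    IntegrableOn (fun y => kel n α c ρ g y / dist x y ^ ((n : ℝ) + α)) (extb x τ) := by
  have hk : 0 < (n : ℝ) + α := by positivity
  have ha : 0 < dist x c := dist_pos.2 hx
  set ε : ℝ := ρ ^ 2 / (dist x c * (dist x c / τ + 1)) with hε
  have hεpos : 0 < ε := by positivity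
  have h1 := int_off hα hg hL (inversion c ρ x) hεpos
  rw [cv_integrable c hρ.ne' (extb_meas _ _)] at h1
  have h2 : IntegrableOn (fun y => (dist x c / ρ) ^ ((n : ℝ) + α) *
      (kel n α c ρ g y / dist x y ^ ((n : ℝ) + α)))
      (inversion c ρ ⁻¹' extb (inversion c ρ x) ε) := by
    refine h1.congr ?_
    filter_upwards [ae_ne c _ Measure.restrict_le_self.absolutelyContinuous] with y hy
    exact kernel_id hk hρ hx hy _
  have h3 : IntegrableOn (fun y => kel n α c ρ g y / dist x y ^ ((n : ℝ) + α))
      (inversion c ρ ⁻¹' extb (inversion c ρ x) ε) := by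
    have := h2.const_mul (((dist x c / ρ) ^ ((n : ℝ) + α))⁻¹)
    refine this.congr ?_
    filter_upwards with y
    have : 0 < (dist x c / ρ) ^ ((n : ℝ) + α) := by positivity
    field_simp
  rw [← integrableOn_congr_set_ae (ae_diff_c c _)]
  refine h3.mono_set ?_
  rintro y ⟨hy, hyc⟩
  have hy : τ ≤ dist x y := hy
  have hyc : 0 < dist y c := dist_pos.2 hyc
  change ε ≤ dist _ _
  rw [dist_inversion_inversion hx (dist_pos.1 hyc), hε, div_mul_eq_mul_div,
    div_le_div_iff₀ (by positivity) (by positivity)]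
  have t : dist y c ≤ dist x y + dist x c := by
    rw [dist_comm x y]; exact dist_triangle _ _ _
  have t2 : dist x c ≤ dist x c / τ * dist x y := by
    rw [div_mul_eq_mul_div, le_div_iff₀ hτ]; exact mul_le_mul_of_nonneg_left hy ha.le
  have t3 : dist y c ≤ dist x y * (dist x c / τ + 1) := by linarith
  calc ρ ^ 2 * (dist x c * dist y c) ≤ ρ ^ 2 * (dist x c * (dist x y * (dist x c / τ + 1))) := by
        gcongr
    _ = _ := by ring

lemma ball_vol {n : ℕ} (x : EE n) {r : ℝ} (hr : 0 < r) :
    volume.real (Metric.ball x r) = r ^ n * volume.real (Metric.ball (0 : EE n) 1) := by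
  rw [measureReal_def, Measure.addHaar_ball_of_pos _ _ hr, finrank_euclideanSpace_fin,
    ENNReal.toReal_mul, ENNReal.toReal_ofReal (by positivity), measureReal_def]

lemma shell_vol {n : ℕ} (x : EE n) {τ η : ℝ} (hτ : 0 < τ) (h0 : 0 ≤ η) (h1 : η < 1)
    {s : Set (EE n)} (hs : ∀ y ∈ s, τ * (1 - η) ≤ dist x y ∧ dist x y ≤ τ * (1 + η)) :
    volume.real s ≤ τ ^ n * (2 * η * n * 2 ^ (n - 1)) * volume.real (Metric.ball (0 : EE n) 1) := by
  have hsub : s ⊆ Metric.closedBall x (τ * (1 + η)) \ Metric.ball x (τ * (1 - η)) := by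
    intro y hy
    have := hs y hy
    simp only [Set.mem_sdiff, Metric.mem_closedBall, Metric.mem_ball, dist_comm y x]
    exact ⟨this.2, not_lt.2 this.1⟩
  refine (measureReal_mono hsub (measure_ne_top_of_subset sdiff_subset
    measure_closedBall_lt_top.ne)).trans ?_
  have hb : Metric.ball x (τ * (1 - η)) ⊆ Metric.closedBall x (τ * (1 + η)) :=
    Metric.ball_subset_closedBall.trans (Metric.closedBall_subset_closedBall (by nlinarith))
  rw [measureReal_sdiff hb Metric.isOpen_ball.measurableSet measure_closedBall_lt_top.ne,
    Measure.addHaar_real_closedBall _ _ (by positivity)]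
  rw [ball_vol x (by nlinarith), finrank_euclideanSpace_fin, ← sub_mul]
  refine mul_le_mul_of_nonneg_right ?_ measureReal_nonneg
  rw [mul_pow, mul_pow, ← mul_sub]
  refine mul_le_mul_of_nonneg_left ?_ (by positivity)
  have := abs_pow_sub_pow_le (1 + η) (1 - η) n
  refine (le_abs_self _).trans (this.trans ?_)
  have e1 : |1 + η - (1 - η)| = 2 * η := by rw [abs_of_nonneg] <;> linarith
  rw [e1]
  refine mul_le_mul_of_nonneg_left ?_ (by positivity)
  refine pow_le_pow_left₀ (by positivity) ?_ _
  rw [abs_of_nonneg (by linarith), abs_of_nonneg (by linarith)]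
  exact max_le (by linarith) (by linarith)


lemma kpv_cv {n : ℕ} [NeZero n] {α : ℝ} (hα : 0 < α) (g : EE n → ℝ)
    {c x : EE n} {ρ : ℝ} (hρ : 0 < ρ) (hx : x ≠ c) (ε : ℝ) :
    ∫ z in extb (inversion c ρ x) ε,
        (g (inversion c ρ x) - g z) / dist (inversion c ρ x) z ^ ((n : ℝ) + α)
      = (dist x c / ρ) ^ ((n : ℝ) + α) * ∫ y in inversion c ρ ⁻¹' extb (inversion c ρ x) ε,
        (ρ / dist y c) ^ ((n : ℝ) - α) * (g (inversion c ρ x) - g (inversion c ρ y))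
          / dist x y ^ ((n : ℝ) + α) := by
  rw [cv_integral c hρ.ne' (extb_meas _ _), ← integral_const_mul]
  apply integral_congr_ae
  filter_upwards [ae_ne c _ Measure.restrict_le_self.absolutelyContinuous] with y hy
  exact kernel_id (by positivity) hρ hx hy _

lemma symm_diff_shell {n : ℕ} {c x y : EE n} {ρ τ : ℝ} (hρ : 0 < ρ) (hx : x ≠ c)
    (hτ : 0 < τ) (hτ2 : τ ≤ dist x c / 8)
    (h : ¬ (y ∈ extb x τ ↔ y ∈ inversion c ρ ⁻¹' extb (inversion c ρ x) (τ * (ρ ^ 2 / dist x c ^ 2)))) :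
    τ * (1 - 2 * τ / dist x c) ≤ dist x y ∧ dist x y ≤ τ * (1 + 2 * τ / dist x c) := by
  have ha : 0 < dist x c := dist_pos.2 hx
  set a := dist x c with hadef
  rcases eq_or_ne y c with rfl | hy
  · exfalso; apply h
    simp only [extb, mem_ofPred_eq, mem_preimage, inversion_self]
    rw [dist_inversion_center, ← hadef]
    have : τ * (ρ ^ 2 / a ^ 2) ≤ ρ ^ 2 / a := by
      have e : ρ ^ 2 / a = a * (ρ ^ 2 / a ^ 2) := by field_simp
      rw [e]; gcongr; linarith
    exact iff_of_true (by linarith) this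
  have hb : 0 < dist y c := dist_pos.2 hy
  have h2 : y ∈ inversion c ρ ⁻¹' extb (inversion c ρ x) (τ * (ρ ^ 2 / a ^ 2)) ↔
      τ * dist y c ≤ dist x y * a := by
    simp only [extb, mem_ofPred_eq, mem_preimage]
    rw [dist_inversion_inversion hx hy, ← hadef]
    have e : ρ ^ 2 / (a * dist y c) * dist x y = (ρ ^ 2 / (a ^ 2 * dist y c)) * (dist x y * a) := by
      field_simp
    have e' : τ * (ρ ^ 2 / a ^ 2) = (ρ ^ 2 / (a ^ 2 * dist y c)) * (τ * dist y c) := by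
      field_simp
    rw [e, e']
    exact mul_le_mul_iff_right₀ (by positivity)
  rw [h2] at h
  have h1 : y ∈ extb x τ ↔ τ ≤ dist x y := Iff.rfl
  rw [h1] at h
  have t1 : dist y c ≤ dist x y + a := by
    rw [dist_comm x y]; exact dist_triangle _ _ _
  have t2 : a ≤ dist x y + dist y c := dist_triangle _ _ _
  have e1 : τ * (1 - 2 * τ / a) = τ - 2 * τ ^ 2 / a := by ring
  have e2 : τ * (1 + 2 * τ / a) = τ + 2 * τ ^ 2 / a := by ring
  have hsq : 0 ≤ 2 * τ ^ 2 / a := by positivity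
  have hd : 0 ≤ dist x y := dist_nonneg
  rw [e1, e2]
  rcases le_or_gt τ (dist x y) with h3 | h3
  · have h4 : dist x y * a < τ * dist y c := by
      by_contra hcon; exact h (iff_of_true h3 (not_lt.1 hcon))
    refine ⟨by linarith, ?_⟩
    have h5 : dist x y ≤ 2 * τ := by nlinarith
    have : dist x y - τ ≤ 2 * τ ^ 2 / a := by
      rw [le_div_iff₀ ha]; nlinarith
    linarith
  · have h4 : τ * dist y c ≤ dist x y * a := by
      by_contra hcon; exact h (iff_of_false (not_le.2 h3) hcon)
    refine ⟨?_, by linarith⟩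
    have : τ - dist x y ≤ 2 * τ ^ 2 / a := by
      rw [le_div_iff₀ ha]; nlinarith
    linarith

lemma kpv {n : ℕ} [NeZero n] {α : ℝ} (hα : 0 < α) (hα2 : α < 2) (g : EE n → ℝ)
    {c x : EE n} {ρ : ℝ} (hρ : 0 < ρ) (hx : x ≠ c)
    (hg : DifferentiableAt ℝ g (inversion c ρ x))
    (hh : ∀ τ > 0, IntegrableOn (fun y => (ρ / dist y c) ^ ((n : ℝ) - α) *
      (g (inversion c ρ x) - g (inversion c ρ y)) / dist x y ^ ((n : ℝ) + α)) (extb x τ)) :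
    Tendsto (fun τ => (∫ z in extb (inversion c ρ x) (τ * (ρ ^ 2 / dist x c ^ 2)),
        (g (inversion c ρ x) - g z) / dist (inversion c ρ x) z ^ ((n : ℝ) + α)) -
      (dist x c / ρ) ^ ((n : ℝ) + α) * ∫ y in extb x τ, (ρ / dist y c) ^ ((n : ℝ) - α) *
      (g (inversion c ρ x) - g (inversion c ρ y)) / dist x y ^ ((n : ℝ) + α)) (𝓝[>] 0) (𝓝 0) := by
  have ha : 0 < dist x c := dist_pos.2 hx
  simp_rw [kpv_cv hα g hρ hx, ← mul_sub]
  rw [show (0:ℝ) = (dist x c / ρ) ^ ((n : ℝ) + α) * 0 by ring]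
  refine Tendsto.const_mul _ ?_
  rw [mul_zero]
  set k := (n : ℝ) + α with hk
  have hkpos : 0 < k := by positivity
  set num : EE n → ℝ := fun y => (ρ / dist y c) ^ ((n : ℝ) - α) *
      (g (inversion c ρ x) - g (inversion c ρ y)) with hnum
  have hO : num =O[𝓝 x] fun y => y - x := by
    have o1 : (fun y => (ρ / dist y c) ^ ((n : ℝ) - α)) =O[𝓝 x] (fun _ => (1 : ℝ)) := by
      refine Tendsto.isBigO_one ℝ (ContinuousAt.tendsto ?_)
      apply ContinuousAt.rpow_const
      · exact ContinuousAt.div continuousAt_const (by fun_prop) ha.ne'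
      · left; positivity
    have o2 : (fun y => g (inversion c ρ x) - g (inversion c ρ y)) =O[𝓝 x] fun y => y - x := by
      have d : DifferentiableAt ℝ (fun y => g (inversion c ρ y)) x :=
        DifferentiableAt.comp x hg (hasFDerivAt_inversion hx).differentiableAt
      have := d.isBigO_sub.neg_left
      simpa using this
    have := o1.norm_right.mul o2.norm_right
    simpa [hnum] using this
  obtain ⟨M, hMpos, hM⟩ := hO.exists_pos
  rw [Asymptotics.IsBigOWith] at hM
  obtain ⟨r0, hr0, hball⟩ := Metric.eventually_nhds_iff.1 hM
  set h : EE n → ℝ := fun y => num y / dist x y ^ k with hh_def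
  set V := volume.real (Metric.ball (0 : EE n) 1) with hV
  set a := dist x c with hadef
  -- the bound
  set bd : ℝ → ℝ := fun τ => 2 * ((M * (2 * τ) / (τ / 2) ^ k) *
    (τ ^ n * (2 * (2 * τ / a) * n * 2 ^ (n - 1)) * V)) with hbd
  have hbdt : Tendsto bd (𝓝[>] 0) (𝓝 0) := by
    have e : ∀ τ ∈ Ioi (0:ℝ), (2 * (M * 2) * 2 ^ k * (2 * (2 / a) * n * 2 ^ (n - 1)) * V) * τ ^ (2 - α) = bd τ := by
      intro τ hτ
      have hτ : 0 < τ := hτ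
      have e3 : τ ^ (2 - α) = τ ^ 2 * τ ^ n / τ ^ k := by
        rw [← Real.rpow_natCast τ n, ← Real.rpow_natCast τ 2, ← Real.rpow_add hτ, ← Real.rpow_sub hτ, hk]
        congr 1; push_cast; ring
      simp only [hbd]
      rw [e3, Real.div_rpow hτ.le (by norm_num)]
      have := Real.rpow_pos_of_pos hτ k
      have := Real.rpow_pos_of_pos (two_pos : (0:ℝ) < 2) k
      field_simp
    refine Tendsto.congr' (eventually_nhdsWithin_of_forall e) ?_
    have : Tendsto (fun τ : ℝ => τ ^ (2 - α)) (𝓝[>] 0) (𝓝 0) := by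
      have := (Real.continuousAt_rpow_const 0 (2 - α) (Or.inr (by linarith))).tendsto
      rw [Real.zero_rpow (by linarith)] at this
      exact this.mono_left nhdsWithin_le_nhds
    simpa using this.const_mul (2 * (M * 2) * 2 ^ k * (2 * (2 / a) * n * 2 ^ (n - 1)) * V)
  refine squeeze_zero_norm' ?_ hbdt
  have hsm : ∀ᶠ τ in 𝓝[>] (0:ℝ), τ < min (a / 8) (r0 / 3) :=
    eventually_nhdsWithin_of_eventually_nhds (eventually_lt_nhds (by positivity))
  filter_upwards [hsm, self_mem_nhdsWithin] with τ hτ1 hτ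
  have hτ : 0 < τ := hτ
  have hτa : τ < a / 8 := hτ1.trans_le (min_le_left _ _)
  have hτr : τ < r0 / 3 := hτ1.trans_le (min_le_right _ _)
  set A := inversion c ρ ⁻¹' extb (inversion c ρ x) (τ * (ρ ^ 2 / a ^ 2)) with hA
  set A' := extb x τ with hA'
  have mA : MeasurableSet A := meas_inv c ρ (extb_meas _ _)
  have mA' : MeasurableSet A' := extb_meas _ _
  have hη : 2 * τ / a < 1 / 2 := by rw [div_lt_iff₀ ha]; linarith
  have hη0 : 0 ≤ 2 * τ / a := by positivity
  have shell : ∀ s : Set (EE n), (∀ y ∈ s, ¬ (y ∈ A' ↔ y ∈ A)) →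
      ‖∫ y in s, h y‖ ≤ (M * (2 * τ) / (τ / 2) ^ k) *
        (τ ^ n * (2 * (2 * τ / a) * n * 2 ^ (n - 1)) * V) := by
    intro s hs
    have hs' : ∀ y ∈ s, τ * (1 - 2 * τ / a) ≤ dist x y ∧ dist x y ≤ τ * (1 + 2 * τ / a) :=
      fun y hy => symm_diff_shell hρ hx hτ hτa.le (hs y hy)
    have hsfin : volume s < ⊤ := by
      refine (measure_mono (t := Metric.closedBall x (τ * (1 + 2 * τ / a))) ?_).trans_lt
        measure_closedBall_lt_top
      intro y hy
      rw [Metric.mem_closedBall, dist_comm]; exact (hs' y hy).2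
    refine (norm_setIntegral_le_of_norm_le_const (C := M * (2 * τ) / (τ / 2) ^ k) hsfin ?_).trans ?_
    · intro y hy
      obtain ⟨b1, b2⟩ := hs' y hy
      have c1 : τ / 2 ≤ dist x y := by nlinarith
      have c2 : dist x y ≤ 2 * τ := by nlinarith
      have c3 := hball (show dist y x < r0 by rw [dist_comm]; linarith)
      rw [← dist_eq_norm, dist_comm y x] at c3
      simp only [hh_def]
      rw [norm_div, Real.norm_of_nonneg (by positivity : 0 ≤ dist x y ^ k)]
      have c4 : (τ / 2) ^ k ≤ dist x y ^ k := Real.rpow_le_rpow (by positivity) c1 hkpos.le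
      have c5 : 0 < (τ / 2) ^ k := by positivity
      exact div_le_div₀ (by positivity) (c3.trans (by gcongr)) c5 c4
    · refine mul_le_mul_of_nonneg_left ?_ (by positivity)
      exact shell_vol x hτ hη0 (by linarith) hs'
  have iA' : IntegrableOn h A' := hh τ hτ
  have iA : IntegrableOn h A := by
    refine (hh (τ / 2) (by positivity)).mono_set ?_
    intro y hy
    by_cases hy' : y ∈ A'
    · have : τ ≤ dist x y := hy'
      change τ / 2 ≤ dist x y
      linarith
    · have := symm_diff_shell (y := y) hρ hx hτ hτa.le (fun hiff => hy' (hiff.2 hy))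
      change τ / 2 ≤ dist x y
      nlinarith [this.1]
  have s1 := integral_inter_add_sdiff mA' iA
  have s2 := integral_inter_add_sdiff mA iA'
  have key : (∫ y in A, h y) - ∫ y in A', h y = (∫ y in A \ A', h y) - ∫ y in A' \ A, h y := by
    rw [← s1, ← s2, inter_comm A' A]; ring
  rw [key]
  refine (norm_sub_le _ _).trans ?_
  have q1 := shell (A \ A') (fun y hy hiff => hy.2 (hiff.2 hy.1))
  have q2 := shell (A' \ A) (fun y hy hiff => hy.2 (hiff.1 hy.1))
  simp only [hbd]
  linarith

lemma one_int {n : ℕ} {α : ℝ} (hα : 0 < α) (t : ℝ) (x : EE n) {ε : ℝ} (hε : 0 < ε) :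
    IntegrableOn (fun y => t / dist x y ^ ((n : ℝ) + α)) (extb x ε) := by
  have := (int_off hα continuous_const (memL_one (n := n) hα) x hε).const_mul t
  refine this.congr ?_
  filter_upwards with y
  ring

lemma phi_int {n : ℕ} [NeZero n] {α : ℝ} (hα : 0 < α) {c x : EE n} {ρ : ℝ} (hρ : 0 < ρ)
    (hx : x ≠ c) {τ : ℝ} (hτ : 0 < τ) :
    IntegrableOn (fun y => (ρ / dist y c) ^ ((n : ℝ) - α) / dist x y ^ ((n : ℝ) + α)) (extb x τ) := by
  have := kel_int hα continuous_const (memL_one (n := n) hα) hρ hx hτ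
  simpa [kel] using this

lemma fund {n : ℕ} [NeZero n] {α : ℝ} (hα : 0 < α) (hα2 : α < 2)
    {c x : EE n} {ρ : ℝ} (hρ : 0 < ρ) (hx : x ≠ c) :
    Tendsto (fun τ => ∫ y in extb x τ, ((ρ / dist x c) ^ ((n : ℝ) - α) -
      (ρ / dist y c) ^ ((n : ℝ) - α)) / dist x y ^ ((n : ℝ) + α)) (𝓝[>] 0) (𝓝 0) := by
  have ha : 0 < dist x c := dist_pos.2 hx
  set a := dist x c with hadef
  set φ : EE n → ℝ := fun y => (ρ / dist y c) ^ ((n : ℝ) - α) with hφ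
  have hJ : inversion c a x = x := inversion_dist_center c x
  have hid : ∀ y, y ≠ c → (a / dist y c) ^ ((n : ℝ) - α) * (φ x - φ (inversion c a y))
      = φ y - φ x := by
    intro y hy
    have hb : 0 < dist y c := dist_pos.2 hy
    simp only [hφ]
    rw [mul_sub, ← Real.mul_rpow (by positivity) (by positivity),
      ← Real.mul_rpow (by positivity) (by positivity), dist_inversion_center, ← hadef]
    congr 2 <;> field_simp
  have hdiff : DifferentiableAt ℝ φ (inversion c a x) := by
    rw [hJ]
    have d1 : DifferentiableAt ℝ (fun y => dist y c) x :=
      DifferentiableAt.dist ℝ differentiableAt_id (differentiableAt_const c) hx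
    have d2 : DifferentiableAt ℝ (fun y => ρ / dist y c) x := by
      simp_rw [div_eq_mul_inv]
      exact (d1.fun_inv ha.ne').const_mul ρ
    exact d2.rpow_const (Or.inl (by positivity))
  have hint : ∀ τ > 0, IntegrableOn (fun y => (φ y - φ x) / dist x y ^ ((n : ℝ) + α)) (extb x τ) := by
    intro τ hτ
    refine ((phi_int hα hρ hx hτ).sub (one_int hα (φ x) x hτ)).congr ?_
    filter_upwards with y
    simp only [hφ, Pi.sub_apply]; ring
  have hae : ∀ s : Set (EE n), (fun y => (a / dist y c) ^ ((n : ℝ) - α) *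
      (φ (inversion c a x) - φ (inversion c a y)) / dist x y ^ ((n : ℝ) + α)) =ᵐ[volume.restrict s]
      fun y => (φ y - φ x) / dist x y ^ ((n : ℝ) + α) := by
    intro s
    filter_upwards [ae_ne c _ Measure.restrict_le_self.absolutelyContinuous] with y hy
    rw [hJ, hid y hy]
  have key := kpv hα hα2 φ ha hx hdiff (fun τ hτ => (hint τ hτ).congr (hae _).symm)
  rw [← hadef] at key
  simp_rw [integral_congr_ae (hae _)] at key
  rw [hJ] at key
  have e1 : a ^ 2 / a ^ 2 = 1 := by field_simp
  rw [e1, div_self ha.ne', Real.one_rpow] at key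
  have key2 := key.const_mul (1/2)
  rw [mul_zero] at key2
  refine key2.congr (fun τ => ?_)
  have : ∫ y in extb x τ, (φ y - φ x) / dist x y ^ ((n : ℝ) + α) =
      - ∫ y in extb x τ, (φ x - φ y) / dist x y ^ ((n : ℝ) + α) := by
    rw [← integral_neg]
    congr 1; ext y; ring
  rw [this, mul_one]
  change 1 / 2 * ((∫ y in extb x τ, (φ x - φ y) / dist x y ^ ((n : ℝ) + α)) - _) =
    ∫ y in extb x τ, (φ x - φ y) / dist x y ^ ((n : ℝ) + α)
  ring

lemma kelpv {n : ℕ} [NeZero n] {α : ℝ} (hα : 0 < α) (hα2 : α < 2) {u : EE n → ℝ}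
    (hu : Differentiable ℝ u) (huL : MemLalpha n α u)
    {c x : EE n} {ρ : ℝ} (hρ : 0 < ρ) (hx : x ≠ c) {L : ℝ}
    (hL : Tendsto (fun ε => ∫ z in extb (inversion c ρ x) ε,
      (u (inversion c ρ x) - u z) / dist (inversion c ρ x) z ^ ((n : ℝ) + α)) (𝓝[>] 0) (𝓝 L)) :
    Tendsto (fun τ => ∫ y in extb x τ, (kel n α c ρ u x - kel n α c ρ u y) / dist x y ^ ((n : ℝ) + α))
      (𝓝[>] 0) (𝓝 ((ρ / dist x c) ^ ((n : ℝ) + α) * L)) := by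
  have ha : 0 < dist x c := dist_pos.2 hx
  have hi : ∀ τ > 0, IntegrableOn (fun y => (ρ / dist y c) ^ ((n : ℝ) - α) *
      (u (inversion c ρ x) - u (inversion c ρ y)) / dist x y ^ ((n : ℝ) + α)) (extb x τ) := by
    intro τ hτ
    refine (((phi_int hα hρ hx hτ).const_mul (u (inversion c ρ x))).sub
      (kel_int hα hu.continuous huL hρ hx hτ)).congr ?_
    filter_upwards with y
    simp only [Pi.sub_apply, kel]; ring
  have key := kpv hα hα2 u hρ hx (hu _) hi
  have hT : Tendsto (fun τ : ℝ => τ * (ρ ^ 2 / dist x c ^ 2)) (𝓝[>] 0) (𝓝[>] 0) := by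
    refine tendsto_nhdsWithin_iff.2 ⟨?_, ?_⟩
    · have : Tendsto (fun τ : ℝ => τ * (ρ ^ 2 / dist x c ^ 2)) (𝓝 0) (𝓝 (0 * (ρ ^ 2 / dist x c ^ 2))) :=
        (continuous_id.mul continuous_const).tendsto 0
      rw [zero_mul] at this
      exact this.mono_left nhdsWithin_le_nhds
    · filter_upwards [self_mem_nhdsWithin] with τ hτ
      have hτ : 0 < τ := hτ
      exact mem_Ioi.2 (by positivity)
  have h1 := ((hL.comp hT).sub key).const_mul ((ρ / dist x c) ^ ((n : ℝ) + α))
  have h2 := ((fund hα hα2 hρ hx).const_mul (u (inversion c ρ x))).add h1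
  rw [sub_zero, mul_zero, zero_add] at h2
  refine h2.congr' ?_
  filter_upwards [self_mem_nhdsWithin] with τ hτ
  have hτ : 0 < τ := hτ
  have e : (ρ / dist x c) ^ ((n : ℝ) + α) * (dist x c / ρ) ^ ((n : ℝ) + α) = 1 := by
    rw [← Real.mul_rpow (by positivity) (by positivity)]
    rw [show ρ / dist x c * (dist x c / ρ) = 1 by field_simp, Real.one_rpow]
  simp only [Function.comp_apply, sub_sub_cancel]
  rw [← mul_assoc, e, one_mul, ← integral_const_mul, ← integral_add _ (hi τ hτ)]
  · congr 1; ext y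
    simp only [kel]; ring
  · refine ((one_int hα ((ρ / dist x c) ^ ((n : ℝ) - α)) x hτ).sub (phi_int hα hρ hx hτ)).const_mul
      (u (inversion c ρ x)) |>.congr ?_
    filter_upwards with y
    simp only [Pi.sub_apply]; ring

/-- difference -/
noncomputable def ww (n : ℕ) (α : ℝ) (c : EE n) (ρ : ℝ) (g : EE n → ℝ) (y : EE n) : ℝ :=
  kel n α c ρ g y - g y

lemma ww_int {n : ℕ} [NeZero n] {α : ℝ} (hα : 0 < α) {g : EE n → ℝ} (hg : Continuous g)
    (hL : MemLalpha n α g) {c x : EE n} {ρ : ℝ} (hρ : 0 < ρ) (hx : x ≠ c) {τ : ℝ} (hτ : 0 < τ) :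
    IntegrableOn (fun y => ww n α c ρ g y / dist x y ^ ((n : ℝ) + α)) (extb x τ) := by
  refine ((kel_int hα hg hL hρ hx hτ).sub (int_off hα hg hL x hτ)).congr ?_
  filter_upwards with y
  simp only [Pi.sub_apply, ww]; ring

lemma wwpv {n : ℕ} [NeZero n] {α : ℝ} (hα : 0 < α) (hα2 : α < 2) {u : EE n → ℝ}
    (hu : Differentiable ℝ u) (huL : MemLalpha n α u)
    {c x : EE n} {ρ : ℝ} (hρ : 0 < ρ) (hx : x ≠ c) {L L' : ℝ}
    (hL : Tendsto (fun ε => ∫ z in extb (inversion c ρ x) ε,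
      (u (inversion c ρ x) - u z) / dist (inversion c ρ x) z ^ ((n : ℝ) + α)) (𝓝[>] 0) (𝓝 L))
    (hL' : Tendsto (fun ε => ∫ z in extb x ε,
      (u x - u z) / dist x z ^ ((n : ℝ) + α)) (𝓝[>] 0) (𝓝 L')) :
    Tendsto (fun τ => ∫ y in extb x τ, (ww n α c ρ u x - ww n α c ρ u y) / dist x y ^ ((n : ℝ) + α))
      (𝓝[>] 0) (𝓝 ((ρ / dist x c) ^ ((n : ℝ) + α) * L - L')) := by
  refine ((kelpv hα hα2 hu huL hρ hx hL).sub hL').congr' ?_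
  filter_upwards [self_mem_nhdsWithin] with τ hτ
  have hτ : 0 < τ := hτ
  rw [← integral_sub]
  · congr 1; ext y; simp only [ww]; ring
  · refine ((one_int hα (kel n α c ρ u x) x hτ).sub (kel_int hα hu.continuous huL hρ hx hτ)).congr ?_
    filter_upwards with y
    simp only [Pi.sub_apply]; ring
  · refine ((one_int hα (u x) x hτ).sub (int_off hα hu.continuous huL x hτ)).congr ?_
    filter_upwards with y
    simp only [Pi.sub_apply]; ring

lemma ww_anti {n : ℕ} {α : ℝ} (g : EE n → ℝ) {c y : EE n} {ρ : ℝ} (hρ : 0 < ρ) (hy : y ≠ c) :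
    ww n α c ρ g (inversion c ρ y) = - ((dist y c / ρ) ^ ((n : ℝ) - α) * ww n α c ρ g y) := by
  have hb : 0 < dist y c := dist_pos.2 hy
  simp only [ww, kel]
  rw [inversion_inversion c hρ.ne', dist_inversion_center, mul_sub, ← mul_assoc,
    ← Real.mul_rpow (by positivity) (by positivity)]
  rw [show dist y c / ρ * (ρ / dist y c) = 1 by field_simp, Real.one_rpow,
    show ρ / (ρ ^ 2 / dist y c) = dist y c / ρ by field_simp]
  ring

/-- reflected kernel -/
noncomputable def K2 (n : ℕ) (α : ℝ) (c : EE n) (ρ : ℝ) (x y : EE n) : ℝ :=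
  (ρ / dist y c) ^ ((n : ℝ) + α) / dist x (inversion c ρ y) ^ ((n : ℝ) + α)

lemma K2_ident {n : ℕ} {c x y : EE n} {ρ : ℝ} (hρ : 0 < ρ) (hy : y ≠ c) :
    (dist y c / ρ * dist x (inversion c ρ y)) ^ 2 - dist x y ^ 2 =
      (ρ ^ 2 - dist x c ^ 2) * (ρ ^ 2 - dist y c ^ 2) / ρ ^ 2 := by
  obtain ⟨X, rfl⟩ : ∃ X, x = X + c := ⟨x - c, by abel⟩
  obtain ⟨Y, rfl⟩ : ∃ Y, y = Y + c := ⟨y - c, by abel⟩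
  have hY : Y ≠ 0 := by intro h; apply hy; simp [h]
  have hYp : 0 < ‖Y‖ := norm_pos_iff.2 hY
  have e1 : dist (X + c) (inversion c ρ (Y + c)) = ‖X - (ρ / ‖Y‖) ^ 2 • Y‖ := by
    rw [dist_eq_norm, inversion]
    congr 1
    simp [dist_eq_norm]
  have e2 : dist (X + c) (Y + c) = ‖X - Y‖ := by simp [dist_eq_norm]
  have e3 : dist (X + c) c = ‖X‖ := by simp
  have e4 : dist (Y + c) c = ‖Y‖ := by simp
  rw [e1, e2, e3, e4, mul_pow, norm_sub_sq_real, norm_sub_sq_real, inner_smul_right, norm_smul,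
    Real.norm_of_nonneg (by positivity)]
  field_simp
  ring

lemma K2_lt {n : ℕ} {α : ℝ} (hk : 0 < (n : ℝ) + α) {c x y : EE n} {ρ : ℝ} (hρ : 0 < ρ) (hy : y ≠ c)
    (hyx : y ≠ x) (hxb : dist x c < ρ) (hyb : dist y c < ρ) :
    K2 n α c ρ x y < 1 / dist x y ^ ((n : ℝ) + α) := by
  have hb : 0 < dist y c := dist_pos.2 hy
  have hd : 0 < dist x y := dist_pos.2 hyx.symm
  have h1 : dist x y ^ 2 < (dist y c / ρ * dist x (inversion c ρ y)) ^ 2 := by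
    have := K2_ident (x := x) hρ hy
    have p : 0 < (ρ ^ 2 - dist x c ^ 2) * (ρ ^ 2 - dist y c ^ 2) / ρ ^ 2 := by
      have a1 : 0 < ρ ^ 2 - dist x c ^ 2 := by nlinarith [dist_nonneg (x := x) (y := c)]
      have a2 : 0 < ρ ^ 2 - dist y c ^ 2 := by nlinarith
      positivity
    linarith
  have h2 : dist x y < dist y c / ρ * dist x (inversion c ρ y) := lt_of_pow_lt_pow_left₀ 2 (by positivity) h1
  have h3 : K2 n α c ρ x y = 1 / (dist y c / ρ * dist x (inversion c ρ y)) ^ ((n : ℝ) + α) := by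
    rw [K2, Real.mul_rpow (by positivity) (by positivity), Real.div_rpow hρ.le hb.le,
      Real.div_rpow hb.le hρ.le]
    have := Real.rpow_pos_of_pos hρ ((n : ℝ) + α)
    have := Real.rpow_pos_of_pos hb ((n : ℝ) + α)
    rcases eq_or_lt_of_le (dist_nonneg (x := x) (y := inversion c ρ y)) with h | h
    · rw [← h] at h2; linarith
    have := Real.rpow_pos_of_pos h ((n : ℝ) + α)
    field_simp
  rw [h3]
  exact one_div_lt_one_div_of_lt (by positivity) (Real.rpow_lt_rpow hd.le h2 hk)

lemma preim_ball {n : ℕ} (c : EE n) {ρ : ℝ} (hρ : 0 < ρ) :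
    inversion c ρ ⁻¹' (Metric.closedBall c ρ)ᶜ = Metric.ball c ρ \ {c} := by
  ext y
  simp only [mem_preimage, mem_compl_iff, Metric.mem_closedBall, not_le, Set.mem_sdiff,
    Metric.mem_ball, mem_singleton_iff]
  rcases eq_or_ne y c with rfl | hy
  · simp [hρ.le]
  · have hb : 0 < dist y c := dist_pos.2 hy
    rw [dist_inversion_center, lt_div_iff₀ hb]
    constructor
    · intro h; exact ⟨by nlinarith, hy⟩
    · intro h; nlinarith [h.1]

lemma fold_pt {n : ℕ} {α : ℝ} (g : EE n → ℝ) {c x y : EE n} {ρ : ℝ} (hρ : 0 < ρ) (hy : y ≠ c) :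
    (ρ / dist y c) ^ (2 * n) * (ww n α c ρ g (inversion c ρ y) /
      dist x (inversion c ρ y) ^ ((n : ℝ) + α)) = - (ww n α c ρ g y * K2 n α c ρ x y) := by
  have hb : 0 < dist y c := dist_pos.2 hy
  rw [ww_anti g hρ hy, K2, ← Real.rpow_natCast]
  have e : (ρ / dist y c) ^ ((2 * n : ℕ) : ℝ) * (dist y c / ρ) ^ ((n : ℝ) - α) =
      (ρ / dist y c) ^ ((n : ℝ) + α) := by
    rw [show dist y c / ρ = (ρ / dist y c)⁻¹ by rw [inv_div], Real.inv_rpow (by positivity),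
      ← div_eq_mul_inv, ← Real.rpow_sub (by positivity)]
    congr 1; push_cast; ring
  rw [← e]; ring

lemma compl_ball_sub {n : ℕ} {c x : EE n} {ρ τ : ℝ} (h : τ ≤ ρ - dist x c) :
    (Metric.ball c ρ)ᶜ ⊆ extb x τ := by
  intro y hy
  simp only [mem_compl_iff, Metric.mem_ball, not_lt] at hy
  change τ ≤ dist x y
  have := dist_triangle y x c
  rw [dist_comm y x] at this
  linarith

lemma ww_sphere {n : ℕ} {α : ℝ} (g : EE n → ℝ) {c y : EE n} {ρ : ℝ} (hρ : 0 < ρ)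
    (hy : dist y c = ρ) : ww n α c ρ g y = 0 := by
  have : inversion c ρ y = y := by rw [← hy]; exact inversion_dist_center c y
  simp [ww, kel, this, hy, div_self hρ.ne']

lemma fold {n : ℕ} [NeZero n] {α : ℝ} (hα : 0 < α) {g : EE n → ℝ} (hg : Continuous g)
    (hL : MemLalpha n α g) {c x : EE n} {ρ : ℝ} (hρ : 0 < ρ) (hx : x ≠ c) (hxb : dist x c < ρ) :
    IntegrableOn (fun y => ww n α c ρ g y * K2 n α c ρ x y) (Metric.ball c ρ) ∧
    ∫ y in (Metric.ball c ρ)ᶜ, ww n α c ρ g y / dist x y ^ ((n : ℝ) + α) =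
      - ∫ y in Metric.ball c ρ, ww n α c ρ g y * K2 n α c ρ x y := by
  have hsub : (Metric.closedBall c ρ)ᶜ ⊆ (Metric.ball c ρ)ᶜ :=
    compl_subset_compl.2 Metric.ball_subset_closedBall
  have i0 : IntegrableOn (fun y => ww n α c ρ g y / dist x y ^ ((n : ℝ) + α)) (Metric.closedBall c ρ)ᶜ :=
    (ww_int hα hg hL hρ hx (sub_pos.2 hxb)).mono_set (hsub.trans (compl_ball_sub le_rfl))
  have mA : MeasurableSet (Metric.closedBall c ρ)ᶜ := Metric.isClosed_closedBall.measurableSet.compl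
  have hae : ∀ s : Set (EE n), (fun y => (ρ / dist y c) ^ (2 * n) * (ww n α c ρ g (inversion c ρ y) /
      dist x (inversion c ρ y) ^ ((n : ℝ) + α))) =ᵐ[volume.restrict s]
      fun y => - (ww n α c ρ g y * K2 n α c ρ x y) := by
    intro s
    filter_upwards [ae_ne c _ Measure.restrict_le_self.absolutelyContinuous] with y hy
    exact fold_pt g hρ hy
  constructor
  · rw [cv_integrable c hρ.ne' mA, preim_ball c hρ, integrableOn_congr_set_ae (ae_diff_c c _)] at i0
    have := (i0.congr (hae _)).neg
    refine this.congr ?_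
    filter_upwards with y
    simp
  · have e1 : ∫ y in (Metric.ball c ρ)ᶜ, ww n α c ρ g y / dist x y ^ ((n : ℝ) + α) =
        ∫ y in (Metric.closedBall c ρ)ᶜ, ww n α c ρ g y / dist x y ^ ((n : ℝ) + α) := by
      refine setIntegral_eq_of_subset_of_forall_sdiff_eq_zero
        Metric.isOpen_ball.measurableSet.compl hsub ?_
      intro y hy
      have h1 : ρ ≤ dist y c := by simpa using hy.1
      have h2 : dist y c ≤ ρ := by simpa using hy.2
      rw [ww_sphere g hρ (le_antisymm h2 h1), zero_div]
    rw [e1, cv_integral c hρ.ne' mA, preim_ball c hρ, setIntegral_congr_set (ae_diff_c c _),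
      integral_congr_ae (hae _), integral_neg]

lemma min_ineq {n : ℕ} [NeZero n] {α : ℝ} (hα : 0 < α) {g : EE n → ℝ} (hg : Continuous g)
    (hgL : MemLalpha n α g) {c x : EE n} {ρ : ℝ} (hρ : 0 < ρ) (hx : x ≠ c) (hxb : dist x c < ρ)
    (hmin : ∀ y, y ≠ c → dist y c < ρ → ww n α c ρ g x ≤ ww n α c ρ g y)
    (hneg : ww n α c ρ g x ≤ 0) {L : ℝ}
    (hL : Tendsto (fun τ => ∫ y in extb x τ, (ww n α c ρ g x - ww n α c ρ g y) /
      dist x y ^ ((n : ℝ) + α)) (𝓝[>] 0) (𝓝 L))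
    {S : Set (EE n)} (hS : MeasurableSet S) (hSb : S ⊆ Metric.ball c ρ) {s0 : ℝ} (hs0 : 0 < s0)
    (hSx : S ⊆ extb x s0) :
    (∀ y, y ≠ c → dist y c < ρ → y ≠ x → (ww n α c ρ g x - ww n α c ρ g y) / dist x y ^ ((n : ℝ) + α) +
      ww n α c ρ g y * K2 n α c ρ x y ≤ 0) ∧
    IntegrableOn (fun y => (ww n α c ρ g x - ww n α c ρ g y) / dist x y ^ ((n : ℝ) + α) +
      ww n α c ρ g y * K2 n α c ρ x y) S ∧
    L ≤ ww n α c ρ g x * (∫ y in (Metric.ball c ρ)ᶜ, 1 / dist x y ^ ((n : ℝ) + α)) +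
      ∫ y in S, ((ww n α c ρ g x - ww n α c ρ g y) / dist x y ^ ((n : ℝ) + α) +
        ww n α c ρ g y * K2 n α c ρ x y) := by
  have hk : 0 < (n : ℝ) + α := by positivity
  set w := ww n α c ρ g with hw
  set k := (n : ℝ) + α with hkdef
  set B := Metric.ball c ρ with hB
  have mB : MeasurableSet B := Metric.isOpen_ball.measurableSet
  obtain ⟨iK2, hfold⟩ := fold hα hg hgL hρ hx hxb
  have iw : ∀ τ > 0, IntegrableOn (fun y => (w x - w y) / dist x y ^ k) (extb x τ) := by
    intro τ hτ
    refine ((one_int hα (w x) x hτ).sub (ww_int hα hg hgL hρ hx hτ)).congr ?_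
    filter_upwards with y
    simp only [Pi.sub_apply, hw]; ring
  have hpt : ∀ y, y ≠ c → dist y c < ρ → y ≠ x → (w x - w y) / dist x y ^ k +
      w y * K2 n α c ρ x y ≤ 0 := by
    intro y hy hyb hyx
    have h1 := K2_lt (α := α) hk (x := x) hρ hy hyx hxb hyb
    have h2 : 0 ≤ K2 n α c ρ x y := by unfold K2; positivity
    have h3 := hmin y hy hyb
    have : (w x - w y) / dist x y ^ k + w y * K2 n α c ρ x y =
      (w x - w y) * (1 / dist x y ^ k - K2 n α c ρ x y) + w x * K2 n α c ρ x y := by ring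
    rw [this]
    have a1 : (w x - w y) * (1 / dist x y ^ k - K2 n α c ρ x y) ≤ 0 :=
      mul_nonpos_of_nonpos_of_nonneg (by linarith) (by linarith)
    have a2 : w x * K2 n α c ρ x y ≤ 0 := mul_nonpos_of_nonpos_of_nonneg hneg h2
    linarith
  have iS : IntegrableOn (fun y => (w x - w y) / dist x y ^ k + w y * K2 n α c ρ x y) S :=
    ((iw s0 hs0).mono_set hSx).add (iK2.mono_set hSb)
  refine ⟨hpt, iS, ?_⟩
  -- the remainder
  have hrem : Tendsto (fun τ => ∫ y in B \ extb x τ, w y * K2 n α c ρ x y) (𝓝[>] 0) (𝓝 0) := by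
    have e : ∀ τ, ∫ y in B \ extb x τ, w y * K2 n α c ρ x y =
        ∫ y in (extb x τ)ᶜ, w y * K2 n α c ρ x y ∂(volume.restrict B) := by
      intro τ
      rw [Measure.restrict_restrict (extb_meas x τ).compl]
      congr 2
      ext y
      exact and_comm
    simp_rw [e]
    refine iK2.hasFiniteIntegral.tendsto_setIntegral_nhds_zero ?_
    have h1 : Tendsto (fun τ : ℝ => ENNReal.ofReal (τ ^ n * volume.real (Metric.ball (0 : EE n) 1)))
        (𝓝[>] 0) (𝓝 0) := by
      have h2 : Tendsto (fun τ : ℝ => τ ^ n * volume.real (Metric.ball (0 : EE n) 1)) (𝓝[>] 0) (𝓝 0) := by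
        have : Continuous (fun τ : ℝ => τ ^ n * volume.real (Metric.ball (0 : EE n) 1)) := by fun_prop
        have := this.tendsto 0
        rw [zero_pow (NeZero.ne n), zero_mul] at this
        exact this.mono_left nhdsWithin_le_nhds
      simpa using ENNReal.tendsto_ofReal h2
    refine tendsto_of_tendsto_of_tendsto_of_le_of_le' tendsto_const_nhds h1
      (Eventually.of_forall fun _ => zero_le) ?_
    filter_upwards [self_mem_nhdsWithin] with τ hτ
    have hτ : 0 < τ := hτ
    rw [← ball_vol x hτ, ofReal_measureReal measure_ball_lt_top.ne]
    refine (Measure.restrict_apply_le _ _).trans (measure_mono ?_)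
    intro y hy
    have : ¬ τ ≤ dist x y := hy
    rw [Metric.mem_ball, dist_comm]; exact not_le.1 this
  have hlim : Tendsto (fun τ => (∫ y in extb x τ, (w x - w y) / dist x y ^ k) -
      ∫ y in B \ extb x τ, w y * K2 n α c ρ x y) (𝓝[>] 0) (𝓝 L) := by
    simpa using hL.sub hrem
  refine le_of_tendsto hlim ?_
  have hsm : ∀ᶠ τ in 𝓝[>] (0:ℝ), τ < min (ρ - dist x c) s0 :=
    eventually_nhdsWithin_of_eventually_nhds (eventually_lt_nhds (lt_min (sub_pos.2 hxb) hs0))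
  filter_upwards [hsm, self_mem_nhdsWithin] with τ hτ1 hτ
  have hτ : 0 < τ := hτ
  have hτa : τ < ρ - dist x c := hτ1.trans_le (min_le_left _ _)
  have hτs : τ < s0 := hτ1.trans_le (min_le_right _ _)
  have mE : MeasurableSet (extb x τ) := extb_meas _ _
  have hBc : Bᶜ ⊆ extb x τ := compl_ball_sub hτa.le
  have t1 := integral_inter_add_sdiff mB (iw τ hτ)
  have t2 := integral_inter_add_sdiff mE iK2
  have hset : extb x τ \ B = Bᶜ := by
    ext y; constructor
    · exact fun h => h.2
    · exact fun h => ⟨hBc h, h⟩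
  rw [hset] at t1
  have t3 : ∫ y in Bᶜ, (w x - w y) / dist x y ^ k = w x * (∫ y in Bᶜ, 1 / dist x y ^ k) +
      ∫ y in B, w y * K2 n α c ρ x y := by
    have : ∫ y in Bᶜ, (w x - w y) / dist x y ^ k = (∫ y in Bᶜ, w x * (1 / dist x y ^ k)) -
        ∫ y in Bᶜ, w y / dist x y ^ k := by
      rw [← integral_sub]
      · congr 1; ext y; ring
      · exact ((one_int hα 1 x hτ).mono_set hBc).const_mul _
      · exact (ww_int hα hg hgL hρ hx hτ).mono_set hBc
    rw [this, hfold, integral_const_mul]; ring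
  have t4 : (∫ y in extb x τ ∩ B, (w x - w y) / dist x y ^ k) +
      ∫ y in extb x τ ∩ B, w y * K2 n α c ρ x y =
      ∫ y in extb x τ ∩ B, ((w x - w y) / dist x y ^ k + w y * K2 n α c ρ x y) := by
    rw [← integral_add]
    · exact (iw τ hτ).mono_set inter_subset_left
    · exact iK2.mono_set inter_subset_right
  rw [inter_comm B] at t2
  have t5 : ∫ y in extb x τ ∩ B, ((w x - w y) / dist x y ^ k + w y * K2 n α c ρ x y) ≤
      ∫ y in S, ((w x - w y) / dist x y ^ k + w y * K2 n α c ρ x y) := by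
    have hSsub : S ⊆ extb x τ ∩ B := fun y hy => ⟨hτs.le.trans (hSx hy), hSb hy⟩
    have iT : IntegrableOn (fun y => (w x - w y) / dist x y ^ k + w y * K2 n α c ρ x y)
        (extb x τ ∩ B) :=
      ((iw τ hτ).mono_set inter_subset_left).add (iK2.mono_set inter_subset_right)
    have := setIntegral_mono_set (f := fun y => -((w x - w y) / dist x y ^ k + w y * K2 n α c ρ x y))
      iT.neg ?_ hSsub.eventuallyLE
    · rw [integral_neg, integral_neg] at this
      linarith
    · filter_upwards [ae_restrict_mem (mE.inter mB),
        ae_ne c _ Measure.restrict_le_self.absolutelyContinuous] with y hy hyc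
      have hyx : y ≠ x := by
        rintro rfl
        have h : τ ≤ dist y y := hy.1
        rw [dist_self] at h; linarith
      have := hpt y hyc hy.2 hyx
      simp only [Pi.zero_apply]; linarith
  linarith

/-- half of the system -/
structure HalfSys (n : ℕ) (α C q : ℝ) (u v : EE n → ℝ) : Prop where
  upos : ∀ x, 0 < u x
  vpos : ∀ x, 0 < v x
  uL : MemLalpha n α u
  uD : Differentiable ℝ u
  vD : Differentiable ℝ v
  eq : IsFracLap n α C u (fun x => ‖x‖ ^ (((n : ℝ) - α) * q - ((n : ℝ) + α)) * v x ^ q)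
  gr : Tendsto (fun x : EE n => ‖x‖ ^ ((n : ℝ) - α) * u x)
      (comap (fun x : EE n => ‖x‖) atTop) atTop
  q1 : 1 < q
  σ0 : 0 < ((n : ℝ) - α) * q - ((n : ℝ) + α)

lemma norm_inversion0 {n : ℕ} {c x : EE n} {ρ : ℝ} (hρ : 0 < ρ) (hc : ‖c‖ = ρ) (hx : x ≠ c) :
    ‖inversion c ρ x‖ = ρ / dist x c * ‖x‖ := by
  have h0 : dist (0 : EE n) c = ρ := by rw [dist_zero_left, hc]
  have h0c : (0 : EE n) ≠ c := by rintro rfl; simp at hc; linarith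
  have hJ : inversion c ρ (0 : EE n) = 0 := by
    conv_lhs => rw [← h0]
    exact inversion_dist_center c 0
  have := dist_inversion_inversion hx h0c ρ
  rw [hJ, dist_zero_right, dist_zero_right, h0] at this
  have hb : 0 < dist x c := dist_pos.2 hx
  rw [this]; field_simp

lemma kel_pos {n : ℕ} {α : ℝ} {v : EE n → ℝ} (hv : ∀ x, 0 < v x) {c x : EE n} {ρ : ℝ} (hρ : 0 < ρ)
    (hx : x ≠ c) : 0 < kel n α c ρ v x := by
  have hb : 0 < dist x c := dist_pos.2 hx
  have := hv (inversion c ρ x)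
  unfold kel; positivity

lemma eqw {n : ℕ} [NeZero n] {α C q : ℝ} (hα : 0 < α) (hα2 : α < 2) (hC : 0 < C) {u v : EE n → ℝ}
    (H : HalfSys n α C q u v) {c x : EE n} {ρ : ℝ} (hρ : 0 < ρ) (hc : ‖c‖ = ρ) (hx : x ≠ c) :
    Tendsto (fun τ => ∫ y in extb x τ, (ww n α c ρ u x - ww n α c ρ u y) / dist x y ^ ((n : ℝ) + α))
      (𝓝[>] 0) (𝓝 (C⁻¹ * (‖x‖ ^ (((n : ℝ) - α) * q - ((n : ℝ) + α)) *
        (kel n α c ρ v x ^ q - v x ^ q)))) := by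
  have hb : 0 < dist x c := dist_pos.2 hx
  have key : ∀ z : EE n, Tendsto (fun ε => ∫ y in extb z ε,
      (u z - u y) / dist z y ^ ((n : ℝ) + α)) (𝓝[>] 0)
      (𝓝 (C⁻¹ * (‖z‖ ^ (((n : ℝ) - α) * q - ((n : ℝ) + α)) * v z ^ q))) := by
    intro z
    have := (H.eq z).const_mul C⁻¹
    refine this.congr fun ε => ?_
    rw [← mul_assoc, inv_mul_cancel₀ hC.ne', one_mul]; rfl
  have h := wwpv hα hα2 H.uD H.uL hρ hx (key _) (key _)
  convert h using 2
  rw [norm_inversion0 hρ hc hx]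
  have ha : 0 < ρ / dist x c := by positivity
  have hv := H.vpos (inversion c ρ x)
  unfold kel
  rw [Real.mul_rpow ha.le (norm_nonneg _), Real.mul_rpow (by positivity) hv.le, ← Real.rpow_mul ha.le,
    Real.rpow_sub ha]
  field_simp

lemma kappa {n : ℕ} [NeZero n] {α : ℝ} (hα : 0 < α) {c x : EE n} {ρ : ℝ}
    (hx : x ≠ c) (hxb : dist x c < ρ) :
    volume.real (Metric.ball (0 : EE n) 1) / 3 ^ ((n : ℝ) + α) / (ρ - dist x c) ^ α ≤
      ∫ y in (Metric.ball c ρ)ᶜ, 1 / dist x y ^ ((n : ℝ) + α) := by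
  have hk : 0 < (n : ℝ) + α := by positivity
  have hd : 0 < dist x c := dist_pos.2 hx
  set d := dist x c with hdd
  set δ := ρ - d with hδd
  have hδ : 0 < δ := sub_pos.2 hxb
  have hn : ‖x - c‖ = d := (dist_eq_norm x c).symm
  set p : EE n := x + (2 * δ / d) • (x - c) with hp
  have hpx : dist p x = 2 * δ := by
    rw [dist_eq_norm, hp, add_sub_cancel_left, norm_smul, hn, Real.norm_of_nonneg (by positivity)]
    field_simp
  have hpc : dist p c = d + 2 * δ := by
    rw [dist_eq_norm, hp, show x + (2 * δ / d) • (x - c) - c = (1 + 2 * δ / d) • (x - c) by module,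
      norm_smul, hn, Real.norm_of_nonneg (by positivity)]
    field_simp
  have hsub : Metric.ball p δ ⊆ (Metric.ball c ρ)ᶜ := by
    intro y hy
    rw [Metric.mem_ball] at hy
    simp only [mem_compl_iff, Metric.mem_ball, not_lt]
    have := dist_triangle p y c
    rw [dist_comm p y] at this
    linarith
  have hi : IntegrableOn (fun y => 1 / dist x y ^ ((n : ℝ) + α)) (Metric.ball c ρ)ᶜ :=
    (one_int hα 1 x hδ).mono_set (compl_ball_sub le_rfl)
  have h1 : ∫ y in Metric.ball p δ, 1 / dist x y ^ ((n : ℝ) + α) ≤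
      ∫ y in (Metric.ball c ρ)ᶜ, 1 / dist x y ^ ((n : ℝ) + α) :=
    setIntegral_mono_set hi (Eventually.of_forall fun y => by simp only [Pi.zero_apply]; positivity)
      hsub.eventuallyLE
  have h2 : ∫ y in Metric.ball p δ, 1 / (3 * δ) ^ ((n : ℝ) + α) ≤
      ∫ y in Metric.ball p δ, 1 / dist x y ^ ((n : ℝ) + α) := by
    refine setIntegral_mono_on (integrableOn_const measure_ball_lt_top.ne) (hi.mono_set hsub)
      Metric.isOpen_ball.measurableSet ?_
    intro y hy
    rw [Metric.mem_ball] at hy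
    have t1 := dist_triangle x p y
    have t2 := dist_triangle p y x
    rw [dist_comm x p, dist_comm p y] at t1
    rw [dist_comm p y, dist_comm y x] at t2
    have t3 : 0 < dist x y := by linarith
    have t4 : dist x y ≤ 3 * δ := by linarith
    gcongr
  rw [setIntegral_const, ball_vol p hδ, smul_eq_mul] at h2
  refine le_trans (le_of_eq ?_) (h2.trans h1)
  rw [Real.mul_rpow (by norm_num) hδ.le, Real.rpow_add hδ, Real.rpow_natCast]
  field_simp

lemma conv {q a b : ℝ} (hq : 1 < q) (ha : 0 < a) (hb : 0 < b) :
    q * b ^ (q - 1) * (a - b) ≤ a ^ q - b ^ q := by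
  have h := one_add_mul_self_le_rpow_one_add (s := a / b - 1) (by have := div_pos ha hb; linarith) hq.le
  rw [add_sub_cancel, Real.div_rpow ha.le hb.le] at h
  have hbq : 0 < b ^ q := by positivity
  rw [Real.rpow_sub_one hb.ne']
  have : (1 + q * (a / b - 1)) * b ^ q ≤ a ^ q := by
    rwa [le_div_iff₀ hbq] at h
  calc _ = (1 + q * (a / b - 1)) * b ^ q - b ^ q := by field_simp; ring
    _ ≤ _ := by linarith

lemma near {n : ℕ} {α : ℝ} (hnα : α < n) {u : EE n → ℝ} (hu : Continuous u)
    (hgr : Tendsto (fun x : EE n => ‖x‖ ^ ((n : ℝ) - α) * u x)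
      (comap (fun x : EE n => ‖x‖) atTop) atTop) {ρa ρb : ℝ} (ha : 0 < ρa) (hab : ρa ≤ ρb) :
    ∃ η > 0, η < ρa ∧ ∀ (c : EE n) (ρ : ℝ), ‖c‖ = ρ → ρa ≤ ρ → ρ ≤ ρb → ∀ y, y ≠ c → dist y c < η →
      0 < ww n α c ρ u y := by
  obtain ⟨M0, hM0⟩ := (isCompact_closedBall (0 : EE n) (2 * ρb)).bddAbove_image hu.continuousOn
  have hb : 0 < ρb := ha.trans_le hab
  have hk : 0 < (n : ℝ) - α := sub_pos.2 hnα
  set M := (|M0| + 1) * (2 * ρb) ^ ((n : ℝ) - α) with hM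
  have hMp : 0 < M := by positivity
  have h1 := hgr.eventually (eventually_ge_atTop M)
  rw [eventually_comap] at h1
  obtain ⟨R, hR⟩ := eventually_atTop.1 h1
  have hR1 : 0 < |R| + 1 := by positivity
  refine ⟨min (ρa / 2) (ρa ^ 2 / (2 * (|R| + 1))), by positivity, (min_le_left _ _).trans_lt (by linarith), ?_⟩
  intro c ρ hc h1 h2 y hy hyd
  have hρ : 0 < ρ := ha.trans_le h1
  have hd : 0 < dist y c := dist_pos.2 hy
  have e1 : dist y c < ρa / 2 := hyd.trans_le (min_le_left _ _)
  have e2 : dist y c < ρa ^ 2 / (2 * (|R| + 1)) := hyd.trans_le (min_le_right _ _)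
  set J := inversion c ρ y with hJ
  have tri1 : ‖c‖ ≤ ‖y‖ + dist y c := by
    have := dist_triangle (0 : EE n) y c
    simpa [dist_zero_left] using this
  have tri2 : ‖y‖ ≤ ‖c‖ + dist y c := by
    have := dist_triangle y c 0
    simp only [dist_zero_right] at this; linarith
  have hJn : ‖J‖ = ρ / dist y c * ‖y‖ := norm_inversion0 hρ hc hy
  have hyl : ρ / 2 ≤ ‖y‖ := by linarith
  have hyu : ‖y‖ ≤ 2 * ρb := by linarith
  have hJR : R ≤ ‖J‖ := by
    rw [hJn, div_mul_eq_mul_div, le_div_iff₀ hd]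
    rw [lt_div_iff₀ (by positivity)] at e2
    have : ρa ^ 2 ≤ ρ * ρ := by nlinarith
    have t := le_abs_self R
    nlinarith
  have hJp : 0 < ‖J‖ := by rw [hJn]; have : 0 < ‖y‖ := by linarith
                           positivity
  have hgM := hR _ hJR J rfl
  have hyp : 0 < ‖y‖ := by linarith
  have hum : u y ≤ M0 := hM0 ⟨y, by simpa using hyu, rfl⟩
  have : kel n α c ρ u y = ‖J‖ ^ ((n : ℝ) - α) * u J / ‖y‖ ^ ((n : ℝ) - α) := by
    unfold kel
    rw [hJn, Real.mul_rpow (by positivity) hyp.le, ← hJ]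
    field_simp
  unfold ww
  rw [this, sub_pos, lt_div_iff₀ (by positivity)]
  refine lt_of_lt_of_le ?_ hgM
  have f1 : ‖y‖ ^ ((n : ℝ) - α) ≤ (2 * ρb) ^ ((n : ℝ) - α) := by gcongr
  have f2 : 0 < ‖y‖ ^ ((n : ℝ) - α) := by positivity
  have f3 := le_abs_self M0
  have f4 : 0 < (2 * ρb) ^ ((n : ℝ) - α) := by positivity
  calc _ ≤ |M0| * ‖y‖ ^ ((n : ℝ) - α) := by gcongr; linarith
    _ ≤ |M0| * (2 * ρb) ^ ((n : ℝ) - α) := by gcongr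
    _ < _ := by rw [hM]; nlinarith

lemma half {n : ℕ} [NeZero n] {α C q : ℝ} (hα : 0 < α) (hα2 : α < 2) (hC : 0 < C) {u v : EE n → ℝ}
    (H : HalfSys n α C q u v) {c x : EE n} {ρ : ℝ} (hρ : 0 < ρ) (hc : ‖c‖ = ρ) (hx : x ≠ c)
    (hxb : dist x c < ρ) (hmin : ∀ y, y ≠ c → dist y c < ρ → ww n α c ρ u x ≤ ww n α c ρ u y)
    (hneg : ww n α c ρ u x ≤ 0) :
    ‖x‖ ^ (((n : ℝ) - α) * q - ((n : ℝ) + α)) * (q * v x ^ (q - 1)) * ww n α c ρ v x ≤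
      C * (volume.real (Metric.ball (0 : EE n) 1) / 3 ^ ((n : ℝ) + α) / (ρ - dist x c) ^ α) *
        ww n α c ρ u x := by
  have h := (min_ineq hα H.uD.continuous H.uL hρ hx hxb hmin hneg (eqw hα hα2 hC H hρ hc hx)
    MeasurableSet.empty (empty_subset _) one_pos (empty_subset _)).2.2
  rw [setIntegral_empty, add_zero] at h
  have h1 := conv H.q1 (kel_pos (α := α) H.vpos hρ hx) (H.vpos x)
  have h2 := kappa hα hx hxb
  have h3 : ww n α c ρ u x * (∫ y in (Metric.ball c ρ)ᶜ, 1 / dist x y ^ ((n : ℝ) + α)) ≤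
    ww n α c ρ u x * (volume.real (Metric.ball (0 : EE n) 1) / 3 ^ ((n : ℝ) + α) / (ρ - dist x c) ^ α) :=
    mul_le_mul_of_nonpos_left h2 hneg
  have h4 := h.trans h3
  rw [inv_mul_le_iff₀ hC] at h4
  have h5 : 0 ≤ ‖x‖ ^ (((n : ℝ) - α) * q - ((n : ℝ) + α)) := by positivity
  have h6 := mul_le_mul_of_nonneg_left h1 h5
  calc _ = ‖x‖ ^ (((n : ℝ) - α) * q - ((n : ℝ) + α)) * (q * v x ^ (q - 1) * (kel n α c ρ v x - v x)) := by
        unfold ww; ring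
    _ ≤ _ := h6.trans (h4.trans (le_of_eq (by ring)))

lemma ww_cont {n : ℕ} {α : ℝ} {u : EE n → ℝ} (hu : Continuous u) (e : EE n)
    {ρ : ℝ} {x : EE n} (hρ : 0 < ρ) (hx : x ≠ ρ • e) :
    ContinuousAt (fun p : ℝ × EE n => ww n α (p.1 • e) p.1 u p.2) (ρ, x) := by
  have hd : dist x (ρ • e) ≠ 0 := dist_ne_zero.2 hx
  have h1 : ContinuousAt (fun p : ℝ × EE n => inversion (p.1 • e) p.1 p.2) (ρ, x) :=
    ContinuousAt.inversion (by fun_prop) (by fun_prop) (by fun_prop) hx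
  have h2 : ContinuousAt (fun p : ℝ × EE n => p.1 / dist p.2 (p.1 • e)) (ρ, x) :=
    ContinuousAt.div (by fun_prop) (by fun_prop) hd
  have h3 : ContinuousAt (fun p : ℝ × EE n => (p.1 / dist p.2 (p.1 • e)) ^ ((n : ℝ) - α)) (ρ, x) :=
    h2.rpow_const (Or.inl (div_ne_zero hρ.ne' hd))
  exact (h3.mul (hu.continuousAt.comp h1)).sub (hu.continuousAt.comp continuousAt_snd)

lemma exmin {n : ℕ} {α : ℝ} (hnα : α < n) {u : EE n → ℝ} (hu : Continuous u)
    (hgr : Tendsto (fun x : EE n => ‖x‖ ^ ((n : ℝ) - α) * u x)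
      (comap (fun x : EE n => ‖x‖) atTop) atTop) {e : EE n} (he : ‖e‖ = 1) {ρ : ℝ} (hρ : 0 < ρ)
    {z : EE n} (hz : z ≠ ρ • e) (hzb : dist z (ρ • e) < ρ) (hzn : ww n α (ρ • e) ρ u z < 0) :
    ∃ x, x ≠ ρ • e ∧ dist x (ρ • e) < ρ ∧ ww n α (ρ • e) ρ u x < 0 ∧
      ∀ y, y ≠ ρ • e → dist y (ρ • e) < ρ → ww n α (ρ • e) ρ u x ≤ ww n α (ρ • e) ρ u y := by
  have hc : ‖ρ • e‖ = ρ := by rw [norm_smul, he, Real.norm_of_nonneg hρ.le, mul_one]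
  obtain ⟨η, hη, hηρ, hpos⟩ := near hnα hu hgr hρ le_rfl
  have hpos := hpos (ρ • e) ρ hc le_rfl le_rfl
  set c := ρ • e with hcd
  have hK : IsCompact (Metric.closedBall c ρ \ Metric.ball c η) :=
    (isCompact_closedBall c ρ).diff Metric.isOpen_ball
  have hKne : ∀ y ∈ Metric.closedBall c ρ \ Metric.ball c η, y ≠ c := by
    rintro y hy rfl
    exact hy.2 (Metric.mem_ball_self hη)
  have hzK : z ∈ Metric.closedBall c ρ \ Metric.ball c η := by
    refine ⟨hzb.le, fun h => ?_⟩
    have := hpos z hz h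
    linarith
  have hcont : ContinuousOn (fun y => ww n α c ρ u y) (Metric.closedBall c ρ \ Metric.ball c η) := by
    intro y hy
    have h1 := ww_cont (α := α) hu e hρ (hKne y hy)
    have h2 : ContinuousAt (fun y : EE n => ((ρ, y) : ℝ × EE n)) y := by fun_prop
    exact (ContinuousAt.comp (f := fun y : EE n => ((ρ, y) : ℝ × EE n)) (x := y) h1 h2).continuousWithinAt
  obtain ⟨x, hxK, hmin⟩ := hK.exists_isMinOn ⟨z, hzK⟩ hcont
  have hxn : ww n α c ρ u x < 0 := lt_of_le_of_lt (hmin hzK) hzn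
  refine ⟨x, hKne x hxK, lt_of_le_of_ne hxK.1 fun h => ?_, hxn, fun y hy hyb => ?_⟩
  · rw [ww_sphere u hρ h] at hxn
    exact lt_irrefl _ hxn
  · by_cases h : dist y c < η
    · exact (hxn.trans (hpos y hy h)).le
    · exact hmin ⟨hyb.le, h⟩

lemma bdA {n : ℕ} {q σ : ℝ} (hq : 1 < q) (hσ : 0 < σ) {v : EE n → ℝ} (hv : Continuous v) (hvp : ∀ x, 0 < v x) (R : ℝ) :
    ∃ A > 0, ∀ x, ‖x‖ ≤ R → ‖x‖ ^ σ * (q * v x ^ (q - 1)) ≤ A := by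
  have hc : Continuous (fun x : EE n => ‖x‖ ^ σ * (q * v x ^ (q - 1))) := by
    refine (continuous_norm.rpow_const fun _ => Or.inr hσ.le).mul
      (continuous_const.mul (hv.rpow_const fun x => Or.inl (hvp x).ne'))
  obtain ⟨A, hA⟩ := (isCompact_closedBall (0 : EE n) R).bddAbove_image hc.continuousOn
  refine ⟨|A| + 1, by positivity, fun x hx => ?_⟩
  have := hA ⟨x, by simpa using hx, rfl⟩
  simp only at this
  have := le_abs_self A
  linarith

lemma step {n : ℕ} [NeZero n] {α C q : ℝ} (hα : 0 < α) (hα2 : α < 2) (hnα : α < n) (hC : 0 < C) {u v : EE n → ℝ}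
    (H : HalfSys n α C q u v) (R : ℝ) : ∃ A > 0, ∀ (e : EE n) (ρ : ℝ), ‖e‖ = 1 → 0 < ρ → ρ ≤ R →
    (∃ z, z ≠ ρ • e ∧ dist z (ρ • e) < ρ ∧ ww n α (ρ • e) ρ u z < 0) →
    ∃ x, x ≠ ρ • e ∧ dist x (ρ • e) < ρ ∧ ww n α (ρ • e) ρ u x < 0 ∧ ww n α (ρ • e) ρ v x < 0 ∧
      (∀ y, y ≠ ρ • e → dist y (ρ • e) < ρ → ww n α (ρ • e) ρ u x ≤ ww n α (ρ • e) ρ u y) ∧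
      C * (volume.real (Metric.ball (0 : EE n) 1) / 3 ^ ((n : ℝ) + α)) / (ρ - dist x (ρ • e)) ^ α *
        -ww n α (ρ • e) ρ u x ≤ A * -ww n α (ρ • e) ρ v x := by
  obtain ⟨A, hA, hbd⟩ := bdA H.q1 H.σ0 H.vD.continuous H.vpos (2 * R)
  refine ⟨A, hA, ?_⟩
  rintro e ρ he hρ hρR ⟨z, hz, hzb, hzn⟩
  have hc : ‖ρ • e‖ = ρ := by rw [norm_smul, he, Real.norm_of_nonneg hρ.le, mul_one]
  obtain ⟨x, hx, hxb, hxn, hmin⟩ := exmin hnα H.uD.continuous H.gr he hρ hz hzb hzn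
  have h := half hα hα2 hC H hρ hc hx hxb hmin hxn.le
  set c := ρ • e with hcd
  have hδ : 0 < ρ - dist x c := sub_pos.2 hxb
  have hV : 0 < volume.real (Metric.ball (0 : EE n) 1) :=
    ENNReal.toReal_pos (Metric.measure_ball_pos _ _ one_pos).ne' measure_ball_lt_top.ne
  set c1 := (volume.real (Metric.ball (0 : EE n) 1) / 3 ^ ((n : ℝ) + α)) with hc1
  have hc1p : 0 < c1 := by positivity
  have hcoef : 0 < C * (c1 / (ρ - dist x c) ^ α) := by positivity
  have hneg := h.trans_lt (mul_neg_of_pos_of_neg hcoef hxn)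
  have hvx := H.vpos x
  have hq0 : 0 < q := by linarith [H.q1]
  set a := ‖x‖ ^ (((n : ℝ) - α) * q - ((n : ℝ) + α)) * (q * v x ^ (q - 1)) with ha
  have ha0 : 0 ≤ a := by positivity
  have hvn : ww n α c ρ v x < 0 := by
    by_contra hcon
    have := mul_nonneg ha0 (not_lt.1 hcon)
    linarith
  have hxR : ‖x‖ ≤ 2 * R := by
    have := dist_triangle x c 0
    simp only [dist_zero_right] at this; linarith
  have haA : a ≤ A := hbd x hxR
  refine ⟨x, hx, hxb, hxn, hvn, hmin, ?_⟩
  have : a * -ww n α c ρ v x ≤ A * -ww n α c ρ v x := mul_le_mul_of_nonneg_right haA (by linarith)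
  have e1 : C * c1 / (ρ - dist x c) ^ α = C * (c1 / (ρ - dist x c) ^ α) := by ring
  rw [e1]
  linarith

lemma lemL {n : ℕ} [NeZero n] {α C q r : ℝ} (hα : 0 < α) (hα2 : α < 2) (hnα : α < n) (hC : 0 < C) {u v : EE n → ℝ}
    (H : HalfSys n α C q u v) (H' : HalfSys n α C r v u) {R : ℝ} (hR : 0 < R) :
    ∃ δ > 0, ∀ (e : EE n) (ρ : ℝ), ‖e‖ = 1 → 0 < ρ → ρ ≤ R →
    (∃ z, z ≠ ρ • e ∧ dist z (ρ • e) < ρ ∧ (ww n α (ρ • e) ρ u z < 0 ∨ ww n α (ρ • e) ρ v z < 0)) →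
    ∃ x, x ≠ ρ • e ∧ dist x (ρ • e) ≤ ρ - δ ∧ ww n α (ρ • e) ρ u x < 0 := by
  obtain ⟨A, hA, hs⟩ := step hα hα2 hnα hC H R
  obtain ⟨A', hA', hs'⟩ := step hα hα2 hnα hC H' R
  have hV : 0 < volume.real (Metric.ball (0 : EE n) 1) :=
    ENNReal.toReal_pos (Metric.measure_ball_pos _ _ one_pos).ne' measure_ball_lt_top.ne
  set c1 := C * (volume.real (Metric.ball (0 : EE n) 1) / 3 ^ ((n : ℝ) + α)) with hc1
  have hc1p : 0 < c1 := by positivity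
  refine ⟨(c1 ^ 2 / (A * A' * R ^ α)) ^ (1 / α), by positivity, ?_⟩
  rintro e ρ he hρ hρR ⟨z, hz, hzb, hzn⟩
  have hun : ∃ z, z ≠ ρ • e ∧ dist z (ρ • e) < ρ ∧ ww n α (ρ • e) ρ u z < 0 := by
    rcases hzn with h | h
    · exact ⟨z, hz, hzb, h⟩
    · obtain ⟨y, h1, h2, h3, h4, -⟩ := hs' e ρ he hρ hρR ⟨z, hz, hzb, h⟩
      exact ⟨y, h1, h2, h4⟩
  obtain ⟨x, hx, hxb, hxu, hxv, hxm, hxi⟩ := hs e ρ he hρ hρR hun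
  obtain ⟨y, hy, hyb, hyv, hyu, hym, hyi⟩ := hs' e ρ he hρ hρR ⟨x, hx, hxb, hxv⟩
  refine ⟨x, hx, ?_, hxu⟩
  have m1 := hxm y hy hyb
  have m2 := hym x hx hxb
  set a := -ww n α (ρ • e) ρ u x with ha
  set b := -ww n α (ρ • e) ρ v y with hb
  have ha0 : 0 < a := by linarith
  have hb0 : 0 < b := by linarith
  set δ := ρ - dist x (ρ • e) with hδ
  set δ' := ρ - dist y (ρ • e) with hδ'
  have hδ0 : 0 < δ := sub_pos.2 hxb
  have hδ0' : 0 < δ' := sub_pos.2 hyb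
  have hδR : δ' ≤ R := by have := dist_nonneg (x := y) (y := ρ • e); linarith
  have i1 : c1 / δ ^ α * a ≤ A * b := hxi.trans (mul_le_mul_of_nonneg_left (by linarith) hA.le)
  have i2 : c1 / δ' ^ α * b ≤ A' * a := hyi.trans (mul_le_mul_of_nonneg_left (by linarith) hA'.le)
  have i3 : c1 / R ^ α * b ≤ A' * a := by
    refine le_trans ?_ i2
    gcongr
  have i4 : (c1 / δ ^ α) * (c1 / R ^ α) * (a * b) ≤ (A * A') * (a * b) := by
    calc _ = (c1 / δ ^ α * a) * (c1 / R ^ α * b) := by ring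
      _ ≤ (A * b) * (A' * a) := by gcongr
      _ = _ := by ring
  have i5 := le_of_mul_le_mul_right i4 (mul_pos ha0 hb0)
  have hδα : 0 < δ ^ α := by positivity
  have hRα : 0 < R ^ α := by positivity
  have i6 : c1 ^ 2 / (A * A' * R ^ α) ≤ δ ^ α := by
    rw [div_mul_div_comm, div_le_iff₀ (by positivity)] at i5
    rw [div_le_iff₀ (by positivity)]
    linarith
  have i7 : (c1 ^ 2 / (A * A' * R ^ α)) ^ (1 / α) ≤ δ := by
    calc _ ≤ (δ ^ α) ^ (1 / α) := by gcongr
      _ = δ := by rw [← Real.rpow_mul hδ0.le, mul_one_div_cancel hα.ne', Real.rpow_one]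
  linarith

/-- nonnegativity in the ball -/
def Good (n : ℕ) (α : ℝ) (e : EE n) (u : EE n → ℝ) (ρ : ℝ) : Prop :=
  ∀ y, y ≠ ρ • e → dist y (ρ • e) < ρ → 0 ≤ ww n α (ρ • e) ρ u y

lemma strict {n : ℕ} [NeZero n] {α C q : ℝ} (hα : 0 < α) (hα2 : α < 2) (hnα : α < n) (hC : 0 < C) {u v : EE n → ℝ}
    (H : HalfSys n α C q u v) {e : EE n} (he : ‖e‖ = 1) {ρ : ℝ} (hρ : 0 < ρ)
    (hu : Good n α e u ρ) (hv : Good n α e v ρ) {x : EE n} (hx : x ≠ ρ • e) (hxb : dist x (ρ • e) < ρ) :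
    0 < ww n α (ρ • e) ρ u x := by
  by_contra hcon
  have hc : ‖ρ • e‖ = ρ := by rw [norm_smul, he, Real.norm_of_nonneg hρ.le, mul_one]
  have hw0 : ww n α (ρ • e) ρ u x = 0 := le_antisymm (not_lt.1 hcon) (hu x hx hxb)
  obtain ⟨η, hη, hηρ, hpos⟩ := near hnα H.uD.continuous H.gr hρ le_rfl
  have hpos := hpos (ρ • e) ρ hc le_rfl le_rfl
  have hvx := hv x hx hxb
  unfold Good at hu
  set c := ρ • e with hcd
  have hxη : η ≤ dist x c := by
    by_contra h
    exact hcon (hpos x hx (not_le.1 h))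
  have hmin : ∀ y, y ≠ c → dist y c < ρ → ww n α c ρ u x ≤ ww n α c ρ u y := by
    intro y hy hyb; rw [hw0]; exact hu y hy hyb
  have hSb : Metric.ball c (η / 2) ⊆ Metric.ball c ρ := Metric.ball_subset_ball (by linarith)
  have hSx : Metric.ball c (η / 2) ⊆ extb x (η / 2) := by
    intro y hy
    rw [Metric.mem_ball] at hy
    change η / 2 ≤ dist x y
    have := dist_triangle x y c
    linarith
  obtain ⟨h1, h2, h3⟩ := min_ineq hα H.uD.continuous H.uL hρ hx hxb hmin hw0.le
    (eqw hα hα2 hC H hρ hc hx) Metric.isOpen_ball.measurableSet hSb (half_pos hη) hSx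
  have hL : 0 ≤ C⁻¹ * (‖x‖ ^ (((n : ℝ) - α) * q - ((n : ℝ) + α)) *
        (kel n α c ρ v x ^ q - v x ^ q)) := by
    have : v x ≤ kel n α c ρ v x := by unfold ww at hvx; linarith
    have h5 : v x ^ q ≤ kel n α c ρ v x ^ q :=
      Real.rpow_le_rpow (H.vpos x).le this (by linarith [H.q1])
    have := sub_nonneg.2 h5
    positivity
  have h4 := hL.trans h3
  have hk : 0 < (n : ℝ) + α := by positivity
  rw [hw0] at h4 h2
  rw [zero_mul, zero_add] at h4
  have hlt : ∀ᵐ y ∂(volume.restrict (Metric.ball c (η / 2))),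
      (0 - ww n α c ρ u y) / dist x y ^ ((n : ℝ) + α) + ww n α c ρ u y * K2 n α c ρ x y < 0 := by
    filter_upwards [ae_restrict_mem Metric.isOpen_ball.measurableSet,
      ae_ne c _ Measure.restrict_le_self.absolutelyContinuous] with y hy hyc
    have hyd : dist y c < η / 2 := hy
    have hyx : y ≠ x := by rintro rfl; linarith
    have t1 := hpos y hyc (by linarith)
    have t2 := K2_lt (α := α) hk (x := x) hρ hyc hyx hxb (by linarith)
    have : (0 - ww n α c ρ u y) / dist x y ^ ((n : ℝ) + α) + ww n α c ρ u y * K2 n α c ρ x y =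
      ww n α c ρ u y * (K2 n α c ρ x y - 1 / dist x y ^ ((n : ℝ) + α)) := by ring
    rw [this]
    exact mul_neg_of_pos_of_neg t1 (by linarith)
  have hz := (integral_eq_zero_iff_of_nonneg_ae (hlt.mono fun y hy => by
      simp only [Pi.zero_apply, Pi.neg_apply]; linarith) h2.neg).1 (by
    simp only [Pi.neg_apply]
    rw [integral_neg, neg_eq_zero]
    exact le_antisymm (integral_nonpos_of_ae (hlt.mono fun y hy => hy.le)) h4)
  have hF : ∀ᵐ y ∂(volume.restrict (Metric.ball c (η / 2))), False := by
    filter_upwards [hz, hlt] with y a b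
    simp only [Pi.zero_apply, Pi.neg_apply] at a
    linarith
  rw [eventually_false_iff_eq_bot, ae_eq_bot, Measure.restrict_eq_zero] at hF
  exact (Metric.measure_ball_pos volume c (half_pos hη)).ne' hF

lemma good_closed {n : ℕ} {α : ℝ} {u : EE n → ℝ} (hu : Continuous u) (e : EE n) {ρs : ℕ → ℝ} {ρ : ℝ}
    (hρ : 0 < ρ) (hlim : Tendsto ρs atTop (𝓝 ρ)) (hG : ∀ k, Good n α e u (ρs k)) : Good n α e u ρ := by
  intro y hy hyb
  have hc : Tendsto (fun k => ρs k • e) atTop (𝓝 (ρ • e)) := hlim.smul_const e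
  have h1 := (ww_cont (α := α) hu e hρ hy).tendsto.comp (hlim.prodMk_nhds (tendsto_const_nhds (x := y)))
  refine ge_of_tendsto h1 ?_
  have h2 : ∀ᶠ k in atTop, dist y (ρs k • e) < ρs k :=
    (tendsto_const_nhds.dist hc).eventually_lt hlim hyb
  have h3 : ∀ᶠ k in atTop, ρs k • e ≠ y := hc.eventually_ne hy.symm
  filter_upwards [h2, h3] with k a b
  exact hG k y b.symm a

lemma good_right {n : ℕ} [NeZero n] {α C q r : ℝ} (hα : 0 < α) (hα2 : α < 2) (hnα : α < n) (hC : 0 < C) {u v : EE n → ℝ}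
    (H : HalfSys n α C q u v) (H' : HalfSys n α C r v u) {e : EE n} (he : ‖e‖ = 1) {ρ : ℝ} (hρ : 0 < ρ)
    (hu : Good n α e u ρ) (hv : Good n α e v ρ) :
    {t | Good n α e u t ∧ Good n α e v t} ∈ 𝓝[>] ρ := by
  by_contra hcon
  have hfr : ∃ᶠ t in 𝓝[>] ρ, ¬ (Good n α e u t ∧ Good n α e v t) := fun h => hcon (by
    filter_upwards [h] with t ht; exact not_not.1 ht)
  have hev : ∀ᶠ t in 𝓝[>] ρ, t < ρ + 1 ∧ ρ < t :=
    (eventually_nhdsWithin_of_eventually_nhds (eventually_lt_nhds (by linarith))).and self_mem_nhdsWithin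
  obtain ⟨ρs, hlim, hbad⟩ := exists_seq_forall_of_frequently (hfr.and_eventually hev)
  have hlim : Tendsto ρs atTop (𝓝 ρ) := hlim.mono_right nhdsWithin_le_nhds
  obtain ⟨δ, hδ, hL⟩ := lemL hα hα2 hnα hC H H' (R := ρ + 1) (by linarith)
  obtain ⟨η, hη, hηρ, hpos⟩ := near hnα H.uD.continuous H.gr hρ (by linarith : ρ ≤ ρ + 1)
  have hex : ∀ k, ∃ x, x ≠ ρs k • e ∧ dist x (ρs k • e) ≤ ρs k - δ ∧ ww n α (ρs k • e) (ρs k) u x < 0 := by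
    intro k
    obtain ⟨hb, h1, h2⟩ := hbad k
    apply hL e (ρs k) he (by linarith) h1.le
    by_contra hno
    push Not at hno
    exact hb ⟨fun y hy hyb => (hno y hy hyb).1, fun y hy hyb => (hno y hy hyb).2⟩
  choose xs hx1 hx2 hx3 using hex
  have hnorm : ∀ k, ‖ρs k • e‖ = ρs k := fun k => by
    rw [norm_smul, he, Real.norm_of_nonneg (by linarith [(hbad k).2.2]), mul_one]
  have hx4 : ∀ k, η ≤ dist (xs k) (ρs k • e) := by
    intro k
    by_contra h
    have := hpos (ρs k • e) (ρs k) (hnorm k) (hbad k).2.2.le (hbad k).2.1.le (xs k) (hx1 k) (not_le.1 h)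
    linarith [hx3 k]
  have hxK : ∀ k, xs k ∈ Metric.closedBall (0 : EE n) (2 * (ρ + 1)) := by
    intro k
    rw [Metric.mem_closedBall]
    have h1 := dist_triangle (xs k) (ρs k • e) 0
    rw [dist_zero_right (ρs k • e), hnorm] at h1
    linarith [hx2 k, (hbad k).2.1]
  obtain ⟨x, -, φ, hφ, hxlim⟩ := (isCompact_closedBall (0 : EE n) (2 * (ρ + 1))).tendsto_subseq hxK
  have hρl : Tendsto (fun k => ρs (φ k)) atTop (𝓝 ρ) := hlim.comp hφ.tendsto_atTop
  have hcl : Tendsto (fun k => ρs (φ k) • e) atTop (𝓝 (ρ • e)) := hρl.smul_const e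
  have hdl : Tendsto (fun k => dist (xs (φ k)) (ρs (φ k) • e)) atTop (𝓝 (dist x (ρ • e))) :=
    Tendsto.dist hxlim hcl
  have d1 : η ≤ dist x (ρ • e) := ge_of_tendsto' hdl fun k => hx4 _
  have d2 : dist x (ρ • e) ≤ ρ - δ := le_of_tendsto_of_tendsto' hdl (hρl.sub_const δ) fun k => hx2 _
  have hxne : x ≠ ρ • e := dist_pos.1 (by linarith)
  have hs := strict hα hα2 hnα hC H he hρ hu hv hxne (by linarith)
  have h1 := (ww_cont (α := α) H.uD.continuous e hρ hxne).tendsto.comp (hρl.prodMk_nhds hxlim)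
  have := le_of_tendsto' h1 fun k => (hx3 (φ k)).le
  simp only at this
  linarith

lemma good_all {n : ℕ} [NeZero n] {α C q r : ℝ} (hα : 0 < α) (hα2 : α < 2) (hnα : α < n) (hC : 0 < C) {u v : EE n → ℝ}
    (H : HalfSys n α C q u v) (H' : HalfSys n α C r v u) {e : EE n} (he : ‖e‖ = 1) {b : ℝ} (hb : 0 < b) :
    Good n α e u b ∧ Good n α e v b := by
  obtain ⟨δ, hδ, hL⟩ := lemL hα hα2 hnα hC H H' hb
  set a := min (δ / 2) b with ha
  have ha0 : 0 < a := by positivity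
  have hab : a ≤ b := min_le_right _ _
  have hga : Good n α e u a ∧ Good n α e v a := by
    by_contra hno
    have : ∃ x, x ≠ a • e ∧ dist x (a • e) ≤ a - δ ∧ ww n α (a • e) a u x < 0 := by
      apply hL e a he ha0 hab
      by_contra hno2
      push Not at hno2
      exact hno ⟨fun y hy hyb => (hno2 y hy hyb).1, fun y hy hyb => (hno2 y hy hyb).2⟩
    obtain ⟨x, -, h, -⟩ := this
    have h1 : a ≤ δ / 2 := min_le_left _ _
    have := dist_nonneg (x := x) (y := a • e)
    linarith
  have hcl : IsClosed ({t | Good n α e u t ∧ Good n α e v t} ∩ Icc a b) := by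
    refine IsSeqClosed.isClosed ?_
    intro ρs ρ hs hlim
    have hI : ρ ∈ Icc a b := isClosed_Icc.mem_of_tendsto hlim (Eventually.of_forall fun k => (hs k).2)
    have hρ : 0 < ρ := ha0.trans_le hI.1
    exact ⟨⟨good_closed H.uD.continuous e hρ hlim fun k => (hs k).1.1,
      good_closed H.vD.continuous e hρ hlim fun k => (hs k).1.2⟩, hI⟩
  have := hcl.Icc_subset_of_forall_mem_nhdsWithin hga (by
    rintro ρ ⟨hg, hI⟩
    exact good_right hα hα2 hnα hC H H' he (ha0.trans_le hI.1) hg.1 hg.2)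
  exact this ⟨hab, le_rfl⟩

lemma limit_ineq {n : ℕ} {α : ℝ} {u : EE n → ℝ} (hu : Continuous u) {e : EE n} (he : ‖e‖ = 1)
    (hG : ∀ ρ > 0, Good n α e u ρ) {x : EE n} (hx : 0 < inner ℝ e x) :
    u x ≤ u (x - (2 * inner ℝ e x) • e) := by
  set s : ℝ := inner ℝ e x with hs
  set N : ℝ → ℝ := fun t => 1 - 2 * t * s + t ^ 2 * ‖x‖ ^ 2 with hN
  have hNc : Continuous N := by fun_prop
  have hN0 : N 0 = 1 := by simp [hN]
  set g : ℝ → ℝ := fun t => (1 / √(N t)) ^ ((n : ℝ) - α) *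
    u ((1 / N t) • (x + (t * ‖x‖ ^ 2 - 2 * s) • e)) - u x with hg
  have hgc : ContinuousAt g 0 := by
    have h1 : ContinuousAt (fun t => 1 / √(N t)) 0 :=
      continuousAt_const.div (hNc.sqrt.continuousAt) (by simp [hN0])
    have h2 : ContinuousAt (fun t => (1 / √(N t)) ^ ((n : ℝ) - α)) 0 :=
      h1.rpow_const (Or.inl (by simp [hN0]))
    have h3 : ContinuousAt (fun t => (1 / N t) • (x + (t * ‖x‖ ^ 2 - 2 * s) • e)) 0 :=
      (continuousAt_const.div hNc.continuousAt (by simp [hN0])).smul (by fun_prop)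
    exact (h2.mul (hu.continuousAt.comp h3)).sub continuousAt_const
  have hg0 : g 0 = u (x - (2 * s) • e) - u x := by
    simp only [hg, hN0]
    simp [sub_eq_add_neg]
  suffices 0 ≤ g 0 by rw [hg0] at this; linarith
  refine ge_of_tendsto (hgc.tendsto.mono_left (nhdsWithin_le_nhds (s := Ioi 0))) ?_
  have hxp : 0 < ‖x‖ := by
    rw [norm_pos_iff]; rintro rfl; simp [hs] at hx
  have hev : ∀ᶠ t in 𝓝[>] (0:ℝ), t < min (1 / ‖x‖) (2 * s / ‖x‖ ^ 2) :=
    eventually_nhdsWithin_of_eventually_nhds (eventually_lt_nhds (by positivity))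
  filter_upwards [hev, self_mem_nhdsWithin] with t ht ht0
  have ht0 : 0 < t := ht0
  have ht1 : t < 1 / ‖x‖ := ht.trans_le (min_le_left _ _)
  have ht2 : t < 2 * s / ‖x‖ ^ 2 := ht.trans_le (min_le_right _ _)
  rw [lt_div_iff₀ hxp] at ht1
  rw [lt_div_iff₀ (by positivity)] at ht2
  have hne : x ≠ t⁻¹ • e := by
    intro h
    have : ‖x‖ = t⁻¹ := by
      conv_lhs => rw [h]
      rw [norm_smul, he, mul_one, Real.norm_of_nonneg (by positivity)]
    rw [this, mul_inv_cancel₀ ht0.ne'] at ht1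
    exact lt_irrefl _ ht1
  have hd2 : dist x (t⁻¹ • e) ^ 2 = t⁻¹ ^ 2 * N t := by
    rw [dist_eq_norm, norm_sub_sq_real, norm_smul, he, inner_smul_right, real_inner_comm, ← hs,
      Real.norm_of_nonneg (by positivity)]
    simp only [hN]
    field_simp
    ring
  have hdp : 0 < dist x (t⁻¹ • e) := dist_pos.2 hne
  have hNp : 0 < N t := by
    have : 0 < t⁻¹ ^ 2 * N t := by rw [← hd2]; positivity
    exact (pos_iff_pos_of_mul_pos this).1 (by positivity)
  have hdd : dist x (t⁻¹ • e) = t⁻¹ * √(N t) := by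
    rw [← Real.sqrt_sq hdp.le, hd2, Real.sqrt_mul (by positivity), Real.sqrt_sq (by positivity)]
  have hN1 : N t < 1 := by simp only [hN]; nlinarith
  have hlt : dist x (t⁻¹ • e) < t⁻¹ := by
    rw [hdd]
    have : √(N t) < 1 := by rw [Real.sqrt_lt' one_pos]; simpa using hN1
    have : 0 < t⁻¹ := by positivity
    nlinarith
  have key := hG t⁻¹ (by positivity) x hne hlt
  have hsq : 0 < √(N t) := Real.sqrt_pos.2 hNp
  have er : t⁻¹ / dist x (t⁻¹ • e) = 1 / √(N t) := by
    rw [hdd]; field_simp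
  have ei : inversion (t⁻¹ • e) t⁻¹ x = (1 / N t) • (x + (t * ‖x‖ ^ 2 - 2 * s) • e) := by
    rw [inversion, er, div_pow, Real.sq_sqrt hNp.le]
    simp only [vsub_eq_sub, vadd_eq_add, one_pow]
    rw [smul_sub, smul_add, smul_smul, smul_smul, sub_add_eq_add_sub, add_sub_assoc, ← sub_smul]
    congr 2
    have : N t = 1 - 2 * t * s + t ^ 2 * ‖x‖ ^ 2 := rfl
    field_simp
    rw [this]; ring
  unfold ww kel at key
  rw [er, ei] at key
  exact key

lemma half_radial {n : ℕ} {α : ℝ} {u : EE n → ℝ} (hu : Continuous u)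
    (hG : ∀ e : EE n, ‖e‖ = 1 → ∀ ρ > 0, Good n α e u ρ) {x y : EE n} (hxy : ‖x‖ = ‖y‖) : u x ≤ u y := by
  by_cases h : x = y
  · rw [h]
  have hp : 0 < ‖x - y‖ := norm_pos_iff.2 (sub_ne_zero.2 h)
  set e := ‖x - y‖⁻¹ • (x - y) with he
  have he1 : ‖e‖ = 1 := by rw [he, norm_smul, norm_inv, norm_norm, inv_mul_cancel₀ hp.ne']
  have hin : 2 * inner ℝ (x - y) x = ‖x - y‖ ^ 2 := by
    rw [norm_sub_sq_real, inner_sub_left, real_inner_self_eq_norm_sq, real_inner_comm, hxy]; ring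
  have hin2 : inner ℝ e x = ‖x - y‖ / 2 := by
    rw [he, inner_smul_left]
    simp only [map_inv₀, conj_trivial]
    have : inner ℝ (x - y) x = ‖x - y‖ ^ 2 / 2 := by linarith
    rw [this]; field_simp
  have := limit_ineq hu he1 (hG e he1) (x := x) (by rw [hin2]; positivity)
  rwa [hin2, show x - (2 * (‖x - y‖ / 2)) • e = y by
    rw [he, smul_smul, show 2 * (‖x - y‖ / 2) * ‖x - y‖⁻¹ = 1 by field_simp]; simp] at this

end Helpers

/-- Radial symmetry for the fractional Hénon system (Theorem 1.3):
`(−Δ)^{α/2}u = |x|^{σ₁}v^q`, `(−Δ)^{α/2}v = |x|^{σ₂}u^r` with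
`σ₁ = (n−α)q − (n+α)`, `σ₂ = (n−α)r − (n+α)`; under the growth condition
`|x|^{n−α}u(x) → ∞`, `|x|^{n−α}v(x) → ∞`, solutions are radially symmetric
about the origin. -/
theorem radial_symmetry_fractional_henon {n : ℕ} [NeZero n] (α C q r : ℝ)
    (hα : α ∈ Ioo (0 : ℝ) 2) (hnα : α < (n : ℝ)) (hC : 0 < C)
    (hq : ((n : ℝ) + α) / ((n : ℝ) - α) < q) (hr : ((n : ℝ) + α) / ((n : ℝ) - α) < r)
    (u v : EuclideanSpace ℝ (Fin n) → ℝ)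
    (hupos : ∀ x, 0 < u x) (hvpos : ∀ x, 0 < v x)
    (huL : MemLalpha n α u) (hvL : MemLalpha n α v)
    (huC : C11loc u) (hvC : C11loc v)
    (hequ : IsFracLap n α C u
      (fun x => ‖x‖ ^ (((n : ℝ) - α) * q - ((n : ℝ) + α)) * v x ^ q))
    (heqv : IsFracLap n α C v
      (fun x => ‖x‖ ^ (((n : ℝ) - α) * r - ((n : ℝ) + α)) * u x ^ r))
    -- (vi) growth at infinity
    (hgru : Tendsto (fun x : EuclideanSpace ℝ (Fin n) => ‖x‖ ^ ((n : ℝ) - α) * u x)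
      (comap (fun x : EuclideanSpace ℝ (Fin n) => ‖x‖) atTop) atTop)
    (hgrv : Tendsto (fun x : EuclideanSpace ℝ (Fin n) => ‖x‖ ^ ((n : ℝ) - α) * v x)
      (comap (fun x : EuclideanSpace ℝ (Fin n) => ‖x‖) atTop) atTop) :
    ∀ x y : EuclideanSpace ℝ (Fin n), ‖x‖ = ‖y‖ → u x = u y ∧ v x = v y := by
  have hn : 0 < (n : ℝ) - α := sub_pos.2 hnα
  have key : ∀ p : ℝ, ((n : ℝ) + α) / ((n : ℝ) - α) < p →
      1 < p ∧ 0 < ((n : ℝ) - α) * p - ((n : ℝ) + α) := by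
    intro p hp
    have h1 : 1 < ((n : ℝ) + α) / ((n : ℝ) - α) := by
      rw [one_lt_div hn]; linarith [hα.1]
    rw [div_lt_iff₀ hn] at hp
    refine ⟨?_, by linarith⟩
    rw [one_lt_div hn] at h1
    by_contra h
    have := mul_le_mul_of_nonneg_right (not_lt.1 h) hn.le
    linarith
  have hud : Differentiable ℝ u := huC.1.differentiable (by norm_num)
  have hvd : Differentiable ℝ v := hvC.1.differentiable (by norm_num)
  have H : HalfSys n α C q u v :=
    ⟨hupos, hvpos, huL, hud, hvd, hequ, hgru, (key q hq).1, (key q hq).2⟩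
  have H' : HalfSys n α C r v u :=
    ⟨hvpos, hupos, hvL, hvd, hud, heqv, hgrv, (key r hr).1, (key r hr).2⟩
  have G : ∀ e : EE n, ‖e‖ = 1 → ∀ ρ > 0, Good n α e u ρ ∧ Good n α e v ρ :=
    fun e he ρ hρ => good_all hα.1 hα.2 hnα hC H H' he hρ
  intro x y hxy
  exact ⟨le_antisymm
      (half_radial hud.continuous (fun e he ρ hρ => (G e he ρ hρ).1) hxy)
      (half_radial hud.continuous (fun e he ρ hρ => (G e he ρ hρ).1) hxy.symm),
    le_antisymm
      (half_radial hvd.continuous (fun e he ρ hρ => (G e he ρ hρ).2) hxy)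
      (half_radial hvd.continuous (fun e he ρ hρ => (G e he ρ hρ).2) hxy.symm)⟩
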